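/- For every n ≥ 1 and every bijection σ : Fin n → Fin n, there exists a triple diagram without closed strands realizing σ whose number of triple points is exactly N(σ), where N(σ) is the number of ordered pairs (i, j) of indices with i ≠ j such that, writing a = 2i, b = 2j, c = 2σ(i)+1, d = 2σ(j)+1 as integers in {0,…,2n−1}, either a < b < c < d or d < c < b < a. -/

import Mathlib

open Set Metric Real
open scoped RealInnerProductSpace

noncomputable section

/-- The Euclidean plane. -/
abbrev Plane : Type := EuclideanSpace ℝ (Fin 2)

/-- The point of the unit circle at angle `θ`. -/
def unitPt (θ : ℝ) : Plane := (WithLp.equiv 2 (Fin 2 → ℝ)).symm ![Real.cos θ, Real.sin θ]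

/-- The `2n` marked boundary points `v_k = (cos (kπ/n), sin (kπ/n))`. -/
def bpoint (n k : ℕ) : Plane := unitPt (k * Real.pi / n)

/-- The underlying geometric data of a diagram in the closed unit disk:
`na` smooth immersed arcs with endpoints on the boundary circle (transverse to it,
pairwise distinct endpoints, interior in the open disk) and `nl` smooth immersed
loops (1-periodic) contained in the open disk. -/
structure PreDiagram (na nl : ℕ) where
  arc : Fin na → ℝ → Plane
  loop : Fin nl → ℝ → Plane
  arc_smooth : ∀ i, ContDiff ℝ (⊤ : ℕ∞) (arc i)
  loop_smooth : ∀ i, ContDiff ℝ (⊤ : ℕ∞) (loop i)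
  loop_periodic : ∀ i, Function.Periodic (loop i) 1
  arc_immersed : ∀ i, ∀ t ∈ Icc (0:ℝ) 1, deriv (arc i) t ≠ 0
  loop_immersed : ∀ i t, deriv (loop i) t ≠ 0
  arc_in_disk : ∀ i, ∀ t ∈ Icc (0:ℝ) 1, ‖arc i t‖ ≤ 1
  arc_interior : ∀ i, ∀ t ∈ Ioo (0:ℝ) 1, ‖arc i t‖ < 1
  arc_start_bdry : ∀ i, ‖arc i 0‖ = 1
  arc_end_bdry : ∀ i, ‖arc i 1‖ = 1
  arc_transverse_start : ∀ i, ⟪deriv (arc i) 0, arc i 0⟫ ≠ 0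
  arc_transverse_end : ∀ i, ⟪deriv (arc i) 1, arc i 1⟫ ≠ 0
  loop_in_disk : ∀ i t, ‖loop i t‖ < 1
  endpoints_distinct :
    Function.Injective (Sum.elim (fun i => arc i 0) (fun i => arc i 1) :
      Fin na ⊕ Fin na → Plane)

variable {na nl : ℕ}

/-- The passages of the strands of a diagram through the point `p`: parameter values
(with the strand they belong to) mapping to `p`.  For arcs the relevant parameters lie in
`(0,1)`; for loops we take one period `[0,1)`. -/
def PreDiagram.passages (D : PreDiagram na nl) (p : Plane) :
    Set ((Fin na × ℝ) ⊕ (Fin nl × ℝ)) :=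
  Sum.elim (fun q => q.2 ∈ Ioo (0:ℝ) 1 ∧ D.arc q.1 q.2 = p)
           (fun q => q.2 ∈ Ico (0:ℝ) 1 ∧ D.loop q.1 q.2 = p)

/-- The (forward) tangent vector of the branch through a given passage. -/
def PreDiagram.tangent (D : PreDiagram na nl) :
    (Fin na × ℝ) ⊕ (Fin nl × ℝ) → Plane :=
  Sum.elim (fun q => deriv (D.arc q.1) q.2) (fun q => deriv (D.loop q.1) q.2)

/-- A multiple point: a point traversed more than once by the strands,
counting with multiplicity in the parameters. -/
def PreDiagram.IsMultiplePoint (D : PreDiagram na nl) (p : Plane) : Prop :=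
  ¬ (D.passages p).Subsingleton

/-- A triple diagram: a diagram whose set of multiple points is finite, such that through
each multiple point exactly three branches pass, with pairwise linearly independent
tangent vectors, and such that at each such triple point the six tangent rays of the
three branches alternate between outgoing and incoming in cyclic order (equivalently,
some positive combination of the three forward tangent vectors vanishes). -/
structure TripleDiagram (na nl : ℕ) extends PreDiagram na nl where
  multiple_finite : {p : Plane | toPreDiagram.IsMultiplePoint p}.Finite
  triple : ∀ p : Plane, toPreDiagram.IsMultiplePoint p →
    (toPreDiagram.passages p).ncard = 3
  branches_transverse : ∀ p : Plane, toPreDiagram.IsMultiplePoint p →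
    ∀ q₁ ∈ toPreDiagram.passages p, ∀ q₂ ∈ toPreDiagram.passages p, q₁ ≠ q₂ →
      LinearIndependent ℝ ![toPreDiagram.tangent q₁, toPreDiagram.tangent q₂]
  alternating : ∀ p : Plane, toPreDiagram.IsMultiplePoint p →
    ∃ q₁ q₂ q₃, toPreDiagram.passages p = {q₁, q₂, q₃} ∧
      ∃ a b c : ℝ, 0 < a ∧ 0 < b ∧ 0 < c ∧
        a • toPreDiagram.tangent q₁ + b • toPreDiagram.tangent q₂ +
          c • toPreDiagram.tangent q₃ = 0

/-- The number of triple points of a triple diagram. -/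
def TripleDiagram.tripleCount (D : TripleDiagram na nl) : ℕ :=
  {p : Plane | D.toPreDiagram.IsMultiplePoint p}.ncard

/-- A triple diagram (with `n` arcs) realizes the bijection `σ` if its `i`-th arc runs from
the 'in' point `v_{2i}` to the 'out' point `v_{2σ(i)+1}`. -/
def Realizes {n nl : ℕ} (D : TripleDiagram n nl) (σ : Equiv.Perm (Fin n)) : Prop :=
  ∀ i : Fin n, D.arc i 0 = bpoint n (2 * (i : ℕ)) ∧ D.arc i 1 = bpoint n (2 * (σ i : ℕ) + 1)

/-- `N(σ)`: the number of ordered pairs `(i,j)`, `i ≠ j`, such that with `a = 2i`, `b = 2j`,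
`c = 2σ(i)+1`, `d = 2σ(j)+1` in `{0,…,2n−1}`, either `a < b < c < d` or `d < c < b < a`. -/
def Ncross (n : ℕ) (σ : Equiv.Perm (Fin n)) : ℕ :=
  (Finset.univ.filter fun ij : Fin n × Fin n =>
    ij.1 ≠ ij.2 ∧
      ((2 * (ij.1 : ℕ) < 2 * (ij.2 : ℕ) ∧
        2 * (ij.2 : ℕ) < 2 * (σ ij.1 : ℕ) + 1 ∧
        2 * (σ ij.1 : ℕ) + 1 < 2 * (σ ij.2 : ℕ) + 1) ∨
       (2 * (σ ij.2 : ℕ) + 1 < 2 * (σ ij.1 : ℕ) + 1 ∧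
        2 * (σ ij.1 : ℕ) + 1 < 2 * (ij.2 : ℕ) ∧
        2 * (ij.2 : ℕ) < 2 * (ij.1 : ℕ)))).card

end

/-!
Draw the disk as the upper half plane with the marked points at `0, 1, …, 2n - 1` on its boundary.
Every strand ascends from its 'in' point, turns around, and descends vertically to its 'out' point,
so the diagram is a movie of horizontal slices. From one slice to the next either nothing
meets, or one strand turns around, or two neighbouring ascending strands exchange their slots across
the descending end of a third one. The last event creates a triple point with directions
`(1, 1)`, `(-1, 1)`, `(0, -1)`, and these alternate.

The movie is found by induction on `N` plus the number of strands: near a strand whose 'in' and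
'out' points are as close to each other as possible, either some strand can be finished without
changing `N`, or an exchange of the third kind lowers `N` by exactly one. The movie is made smooth
with smooth step functions of the height and carried to the disk by
`(x, y) ↦ exp (-y) (cos (x π / n), sin (x π / n))`.
-/

noncomputable section

open scoped ContDiff Topology

/-! ### Sweeping a diagram by slices -/

section Sweep

/-- A horizontal slice of a diagram drawn in the upper half plane: `active` is the set of strands
that reach the slice, and `slot j` is the slot in which strand `j` ascends, the slot `m` being the
vertical line `x = 2 * m`. -/
structure SweepState (n : ℕ) where
  active : Finset (Fin n)
  slot : Fin n → Fin n

variable {n c : ℕ} {σ w : Equiv.Perm (Fin n)} {A : Finset (Fin n)} {p q o i : Fin n}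

/-- The branches that meet the slice: every active strand `j` ascends (`Sum.inl j`) and later
descends (`Sum.inr j`). -/
def SweepState.branches (s : SweepState n) : Finset (Fin n ⊕ Fin n) :=
  s.active.disjSum s.active

/-- The horizontal position of a branch: an ascending branch is in its slot, the descending branch
of strand `j` is on the vertical line through its 'out' point. -/
def SweepState.lane (σ : Equiv.Perm (Fin n)) (s : SweepState n) : Fin n ⊕ Fin n → ℕ :=
  Sum.elim (fun j => 2 * s.slot j) (fun j => 2 * σ j + 1)

/-- Between the slices `s` and `s'` the ascending strands `p` and `q`, in the slots to the left and
to the right of the 'out' point of the strand `o`, exchange their slots, which makes them meet on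
the descending branch of `o`. -/
structure IsTripleSwap (σ : Equiv.Perm (Fin n)) (s s' : SweepState n) (p q o : Fin n) : Prop where
  mem_left : p ∈ s.active
  mem_right : q ∈ s.active
  mem_out : o ∈ s.active
  slot_left : (s.slot p : ℕ) = σ o
  slot_right : (s.slot q : ℕ) = σ o + 1
  active_eq : s'.active = s.active
  slot_eq : s'.slot = s.slot ∘ Equiv.swap p q

/-- Consecutive slices of a diagram. The Boolean records whether a triple point lies between
them. -/
inductive SweepStep (σ : Equiv.Perm (Fin n)) : Bool → SweepState n → SweepState n → Prop
  | isotopy {s₁ s₂ : SweepState n} (active_eq : s₂.active = s₁.active)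
      (lane_lt_iff : ∀ u ∈ s₁.branches, ∀ v ∈ s₁.branches,
        s₁.lane σ u < s₁.lane σ v ↔ s₂.lane σ u < s₂.lane σ v) : SweepStep σ false s₁ s₂
  | cap {s₁ s₂ : SweepState n} (i : Fin n) (mem : i ∈ s₁.active)
      (active_eq : s₂.active = s₁.active.erase i) (slot_eq : s₂.slot = s₁.slot)
      (lane_lt_iff : ∀ u ∈ s₂.branches,
        s₁.lane σ u < s₁.lane σ (.inl i) ↔ s₁.lane σ u < s₁.lane σ (.inr i)) :
    SweepStep σ false s₁ s₂
  | swap {s₁ s₂ : SweepState n} (p q o : Fin n) (h : IsTripleSwap σ s₁ s₂ p q o) :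
    SweepStep σ true s₁ s₂

/-- A movie of slices that starts with `s₀`, has `c` triple points and loses its last strand by the
time `length`. -/
structure Sweep (σ : Equiv.Perm (Fin n)) (s₀ : SweepState n) (c : ℕ) where
  length : ℕ
  state : ℕ → SweepState n
  isSwap : ℕ → Bool
  state_zero : state 0 = s₀
  step : ∀ k, SweepStep σ (isSwap k) (state k) (state (k + 1))
  active_length : (state length).active = ∅
  count_isSwap : Nat.count (isSwap · = true) length = c

namespace Sweep

/-- The sweep without steps. -/
def ofEmpty (s : SweepState n) (hs : s.active = ∅) : Sweep σ s 0 where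
  length := 0
  state _ := s
  isSwap _ := false
  state_zero := rfl
  step _ := .isotopy rfl fun _ _ _ _ => Iff.rfl
  active_length := hs
  count_isSwap := Nat.count_zero _

/-- The sweep with one more step at the bottom. -/
def cons {s s' : SweepState n} {b : Bool} (h : SweepStep σ b s s') (S : Sweep σ s' c) :
    Sweep σ s (c + b.toNat) where
  length := S.length + 1
  state := Nat.rec s fun k _ => S.state k
  isSwap := Nat.rec b fun k _ => S.isSwap k
  state_zero := rfl
  step
    | 0 => by rw [← S.state_zero] at h; exact h
    | k + 1 => S.step k
  active_length := S.active_length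
  count_isSwap := by
    rw [Nat.count_succ']
    cases b <;> simp [S.count_isSwap]

end Sweep

theorem val_ne_of_perm (w : Equiv.Perm (Fin n)) {a b : Fin n} (h : a ≠ b) : (w a : ℕ) ≠ w b :=
  Fin.val_ne_of_ne (w.injective.ne h)

theorem exists_mem_perm_eq (h : ∀ j ∉ A, w j = σ j) {j : Fin n} (hj : j ∈ A) :
    ∃ k ∈ A, w k = σ j := by
  refine ⟨w.symm (σ j), ?_, w.apply_symm_apply _⟩
  by_contra hk
  have hσ : σ j = σ (w.symm (σ j)) := by rw [← h _ hk, w.apply_symm_apply]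
  exact hk (σ.injective hσ ▸ hj)

/-- The strand `q` is the first strand of `A` to the right of the strand `p`. -/
structure IsNextStrand (A : Finset (Fin n)) (w : Equiv.Perm (Fin n)) (p q : Fin n) : Prop where
  mem_left : p ∈ A
  mem_right : q ∈ A
  lt : (w p : ℕ) < w q
  not_between : ∀ k ∈ A, (w k : ℕ) ≤ w p ∨ (w q : ℕ) ≤ w k

namespace IsNextStrand

theorem ne (h : IsNextStrand A w p q) : p ≠ q := by
  rintro rfl
  exact h.lt.false

theorem not_between_out (h : IsNextStrand A w p q) (hA : ∀ j ∉ A, w j = σ j) {j : Fin n}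
    (hj : j ∈ A) : (σ j : ℕ) ≤ w p ∨ (w q : ℕ) ≤ σ j := by
  obtain ⟨k, hk, hkj⟩ := exists_mem_perm_eq hA hj
  exact hkj ▸ h.not_between k hk

end IsNextStrand

theorem exists_isNextStrand_right (hA : ∀ j ∉ A, w j = σ j) (hi : i ∈ A)
    (hlt : (w i : ℕ) < σ i) : ∃ q, IsNextStrand A w i q ∧ (w q : ℕ) ≤ σ i := by
  obtain ⟨k, hk, hki⟩ := exists_mem_perm_eq hA hi
  obtain ⟨q, hq, hmin⟩ := Finset.exists_min_image {k ∈ A | (w i : ℕ) < w k} (fun k => (w k : ℕ))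
    ⟨k, Finset.mem_filter.2 ⟨hk, hki ▸ hlt⟩⟩
  simp only [Finset.mem_filter] at hq hmin
  refine ⟨q, ⟨hi, hq.1, hq.2, fun k hk => ?_⟩, hki ▸ hmin k ⟨hk, hki ▸ hlt⟩⟩
  exact (le_or_gt _ _).imp_right fun h => hmin k ⟨hk, h⟩

theorem exists_isNextStrand_left (hA : ∀ j ∉ A, w j = σ j) (hi : i ∈ A)
    (hlt : (σ i : ℕ) < w i) : ∃ p, IsNextStrand A w p i ∧ (σ i : ℕ) ≤ w p := by
  obtain ⟨k, hk, hki⟩ := exists_mem_perm_eq hA hi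
  obtain ⟨p, hp, hmax⟩ := Finset.exists_max_image {k ∈ A | (w k : ℕ) < w i} (fun k => (w k : ℕ))
    ⟨k, Finset.mem_filter.2 ⟨hk, hki ▸ hlt⟩⟩
  simp only [Finset.mem_filter] at hp hmax
  refine ⟨p, ⟨hp.1, hi, hp.2, fun k hk => ?_⟩, hki ▸ hmax k ⟨hk, hki ▸ hlt⟩⟩
  exact (lt_or_ge _ _).imp_left fun h => hmax k ⟨hk, h⟩

theorem SweepStep.isotopy_of_move {P P' : Fin n → Fin n} {a b : ℕ}
    (hP : ∀ j ∈ A, j ≠ q → P' j = P j ∧ ((P j : ℕ) < a ∨ b < P j))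
    (hq : a ≤ P q ∧ P q ≤ b) (hq' : a ≤ P' q ∧ P' q ≤ b)
    (hσ : ∀ j ∈ A, (σ j : ℕ) < a ∨ b ≤ σ j) : SweepStep σ false ⟨A, P⟩ ⟨A, P'⟩ := by
  refine .isotopy rfl fun u hu v hv => ?_
  simp only [SweepState.branches, Finset.mem_disjSum] at hu hv
  have hPq : ∀ j ∈ A, j = q ∨ (P' j : ℕ) = P j ∧ ((P j : ℕ) < a ∨ b < P j) := fun j hj =>
    (eq_or_ne j q).imp_right fun h => (hP j hj h).imp_left (congrArg Fin.val)
  obtain ⟨j, hj, rfl⟩ | ⟨j, hj, rfl⟩ := hu <;> obtain ⟨k, hk, rfl⟩ | ⟨k, hk, rfl⟩ := hv <;>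
    simp only [SweepState.lane, Sum.elim_inl, Sum.elim_inr]
  · obtain rfl | hj := hPq j hj <;> obtain rfl | hk := hPq k hk <;> omega
  · have := hσ k hk
    obtain rfl | hj := hPq j hj <;> omega
  · have := hσ j hj
    obtain rfl | hk := hPq k hk <;> omega

theorem SweepStep.cap_of_lt_iff {P : Fin n → Fin n} (hi : i ∈ A)
    (hP : ∀ j ∈ A, j ≠ i → ((P j : ℕ) < P i ↔ (P j : ℕ) ≤ σ i))
    (hσ : ∀ j ∈ A, j ≠ i → ((σ j : ℕ) < P i ↔ (σ j : ℕ) < σ i)) :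
    SweepStep σ false ⟨A, P⟩ ⟨A.erase i, P⟩ := by
  refine .cap i hi rfl rfl fun u hu => ?_
  simp only [SweepState.branches, Finset.mem_disjSum, Finset.mem_erase] at hu
  obtain ⟨j, ⟨hji, hj⟩, rfl⟩ | ⟨j, ⟨hji, hj⟩, rfl⟩ := hu <;>
    simp only [SweepState.lane, Sum.elim_inl, Sum.elim_inr]
  · have := hP j hj hji
    omega
  · have := hσ j hj hji
    omega

theorem sweepStep_fixed (hi : i ∈ A) (hwi : w i = σ i) :
    SweepStep σ false ⟨A, w⟩ ⟨A.erase i, w⟩ := by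
  refine .cap_of_lt_iff hi (fun j _ hji => ?_) fun j _ _ => by rw [hwi]
  have := val_ne_of_perm w hji
  rw [← hwi]
  omega

theorem swap_trans_apply_of_ne_of_ne {j : Fin n} (hp : j ≠ p) (hq : j ≠ q) :
    (Equiv.swap p q).trans w j = w j := by
  rw [Equiv.trans_apply, Equiv.swap_apply_of_ne_of_ne hp hq]

namespace IsNextStrand

theorem sweepStep_cap (h : IsNextStrand A w p q) (hA : ∀ j ∉ A, w j = σ j) (hpq : w p = σ q) :
    SweepStep σ false ⟨A, w⟩ ⟨A.erase q, w⟩ := by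
  have hlt := h.lt
  rw [hpq] at hlt
  refine .cap_of_lt_iff h.mem_right (fun j hj hjq => ?_) fun j hj hjq => ?_
  · have hj := h.not_between j hj
    have := val_ne_of_perm w hjq
    rw [hpq] at hj
    omega
  · have := h.not_between_out hA hj
    have := val_ne_of_perm σ hjq
    omega

theorem sweepStep_erase_swap (h : IsNextStrand A w p q) (hA : ∀ j ∉ A, w j = σ j)
    (hpq : w p = σ q) :
    SweepStep σ false ⟨A.erase q, w⟩ ⟨A.erase q, (Equiv.swap p q).trans w⟩ := by
  have hlt := h.lt
  refine .isotopy_of_move (q := p) (a := w p) (b := w q) (fun j hj hjp => ?_) (by omega)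
    (by simp [hlt.le]) fun j hj => ?_
  · obtain ⟨hjq, hj⟩ := Finset.mem_erase.1 hj
    have := h.not_between j hj
    have := val_ne_of_perm w hjp
    have := val_ne_of_perm w hjq
    exact ⟨swap_trans_apply_of_ne_of_ne hjp hjq, by omega⟩
  · obtain ⟨hjq, hj⟩ := Finset.mem_erase.1 hj
    have := h.not_between_out hA hj
    have := val_ne_of_perm σ hjq
    rw [← hpq] at this
    omega

/-- The slots `w`, except that `q` has been moved next to its left neighbour `p`. -/
def closeUp (h : IsNextStrand A w p q) : Fin n → Fin n :=
  Function.update w q ⟨w p + 1, by have := h.lt; omega⟩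

theorem closeUp_left (h : IsNextStrand A w p q) : h.closeUp p = w p :=
  Function.update_of_ne h.ne ..

theorem closeUp_right (h : IsNextStrand A w p q) : (h.closeUp q : ℕ) = w p + 1 := by
  rw [closeUp, Function.update_self]

theorem closeUp_of_ne (h : IsNextStrand A w p q) {j : Fin n} (hj : j ≠ q) : h.closeUp j = w j :=
  Function.update_of_ne hj ..

theorem sweepStep_closeUp (h : IsNextStrand A w p q) (hA : ∀ j ∉ A, w j = σ j) :
    SweepStep σ false ⟨A, w⟩ ⟨A, h.closeUp⟩ := by
  have hlt := h.lt
  refine .isotopy_of_move (q := q) (a := w p + 1) (b := w q) (fun j hj hjq => ?_) (by omega)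
    (by rw [closeUp_right]; omega) fun j hj => ?_
  · have := h.not_between j hj
    have := val_ne_of_perm w hjq
    exact ⟨h.closeUp_of_ne hjq, by omega⟩
  · have := h.not_between_out hA hj
    omega

theorem sweepStep_swap (h : IsNextStrand A w p q) (ho : o ∈ A) (hpo : w p = σ o) :
    SweepStep σ true ⟨A, h.closeUp⟩ ⟨A, h.closeUp ∘ Equiv.swap p q⟩ :=
  .swap p q o ⟨h.mem_left, h.mem_right, ho, congrArg Fin.val (h.closeUp_left.trans hpo),
    hpo ▸ h.closeUp_right, rfl, rfl⟩

theorem sweepStep_spread (h : IsNextStrand A w p q) (hA : ∀ j ∉ A, w j = σ j) :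
    SweepStep σ false ⟨A, h.closeUp ∘ Equiv.swap p q⟩ ⟨A, (Equiv.swap p q).trans w⟩ := by
  have hlt := h.lt
  refine .isotopy_of_move (q := p) (a := w p + 1) (b := w q) (fun j hj hjp => ?_)
    (by rw [Function.comp_apply, Equiv.swap_apply_left, closeUp_right]; omega)
    (by rw [Equiv.trans_apply, Equiv.swap_apply_left]; omega) fun j hj => ?_
  · rcases eq_or_ne j q with rfl | hjq
    · simp [h.closeUp_left]
    · have := h.not_between j hj
      have := val_ne_of_perm w hjp
      have := val_ne_of_perm w hjq
      rw [swap_trans_apply_of_ne_of_ne hjp hjq, Function.comp_apply,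
        Equiv.swap_apply_of_ne_of_ne hjp hjq, h.closeUp_of_ne hjq]
      exact ⟨rfl, by omega⟩
  · have := h.not_between_out hA hj
    omega

end IsNextStrand

/-- The strands from in-slot `a` to out-slot `c` and from in-slot `b` to out-slot `d` form a pair
counted by `N(σ)`. Since 'out' points are odd, `2 * b < 2 * c + 1` reads `b ≤ c`. -/
abbrev Crosses (a c b d : ℕ) : Prop :=
  a < b ∧ b ≤ c ∧ c < d ∨ d < c ∧ c < b ∧ b < a

/-- The analogue of `N(σ)` for the active strands `A` ascending in the slots given by `w`. -/
def crossingCount (σ w : Equiv.Perm (Fin n)) (A : Finset (Fin n)) : ℕ :=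
  ∑ x ∈ A ×ˢ A, if Crosses (w x.1) (σ x.1) (w x.2) (σ x.2) then 1 else 0

theorem crossingCount_univ_refl : crossingCount σ (Equiv.refl _) Finset.univ = Ncross n σ := by
  rw [crossingCount, Ncross, Finset.univ_product_univ, ← Finset.card_filter]
  congr 1 with ⟨i, j⟩
  rw [Finset.mem_filter, Finset.mem_filter]
  simp only [Finset.mem_univ, true_and, Equiv.refl_apply, Crosses]
  constructor
  · intro h
    exact ⟨by rintro rfl; omega, by omega⟩
  · omega

theorem crossingCount_erase (hi : w i = σ i) :
    crossingCount σ w (A.erase i) = crossingCount σ w A := by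
  refine Finset.sum_subset (Finset.product_subset_product (A.erase_subset i) (A.erase_subset i)) ?_
  rintro ⟨a, b⟩ hab hab'
  simp only [Finset.mem_product, Finset.mem_erase] at hab hab'
  have : (w i : ℕ) = σ i := by rw [hi]
  obtain rfl | rfl : a = i ∨ b = i := by tauto
  all_goals exact if_neg (by dsimp only; omega)

/-- The configurations in which exchanging the neighbours `p` and `q` across the vertical end of the
strand `o` removes exactly one of the pairs counted by `N(σ)`. -/
def IsReducing (σ w : Equiv.Perm (Fin n)) (p q o : Fin n) : Prop :=
  (w q : ℕ) ≤ σ p ∧ ((σ p : ℕ) < σ q ∨ (σ q : ℕ) < w p) ∧ ((w o : ℕ) < w p ∨ (σ p : ℕ) < w o) ∨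
    (σ q : ℕ) < w p ∧ ((σ p : ℕ) < σ q ∨ (w q : ℕ) ≤ σ p) ∧ ((w o : ℕ) ≤ σ q ∨ (w q : ℕ) < w o)

namespace IsNextStrand

theorem crosses_swap_iff (h : IsNextStrand A w p q) (hA : ∀ j ∉ A, w j = σ j) {a b : Fin n}
    (ha : a ∈ A) (hb : b ∈ A) (hab : ¬ ((a = p ∨ a = q) ∧ (b = p ∨ b = q)))
    (hσ : b = p ∨ b = q → (σ a : ℕ) ≠ w p) :
    Crosses ((Equiv.swap p q).trans w a) (σ a) ((Equiv.swap p q).trans w b) (σ b) ↔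
      Crosses (w a) (σ a) (w b) (σ b) := by
  have hlt := h.lt
  have hout := h.not_between_out hA ha
  have position : ∀ j ∈ A, (j = p ∧ (Equiv.swap p q).trans w j = w q) ∨
      (j = q ∧ (Equiv.swap p q).trans w j = w p) ∨ (j ≠ p ∧ j ≠ q ∧
        (Equiv.swap p q).trans w j = w j ∧ ((w j : ℕ) < w p ∨ (w q : ℕ) < w j)) := by
    intro j hj
    rcases eq_or_ne j p with rfl | hjp
    · simp
    rcases eq_or_ne j q with rfl | hjq
    · simp
    have := h.not_between j hj
    have := val_ne_of_perm w hjp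
    have := val_ne_of_perm w hjq
    exact .inr (.inr ⟨hjp, hjq, swap_trans_apply_of_ne_of_ne hjp hjq, by omega⟩)
  have ha := position a ha
  have hb := position b hb
  grind

theorem crossingCount_swap_of_out_eq (h : IsNextStrand A w p q) (hA : ∀ j ∉ A, w j = σ j)
    (hpq : w p = σ q) :
    crossingCount σ ((Equiv.swap p q).trans w) A = crossingCount σ w A := by
  refine Finset.sum_congr rfl fun ⟨a, b⟩ hab => if_congr ?_ rfl rfl
  obtain ⟨ha, hb⟩ := Finset.mem_product.1 hab
  have hlt := h.lt
  have : (w p : ℕ) = σ q := by rw [hpq]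
  by_cases hpair : (a = p ∨ a = q) ∧ (b = p ∨ b = q)
  · obtain ⟨rfl | rfl, rfl | rfl⟩ := hpair <;>
      simp only [Equiv.trans_apply, Equiv.swap_apply_left, Equiv.swap_apply_right] <;> omega
  · refine h.crosses_swap_iff hA ha hb hpair fun hb' => ?_
    rw [hpq]
    exact val_ne_of_perm σ fun haq => hpair ⟨.inr haq, hb'⟩

theorem crossingCount_swap_add_one (h : IsNextStrand A w p q) (hA : ∀ j ∉ A, w j = σ j)
    (ho : o ∈ A) (hop : o ≠ p) (hoq : o ≠ q) (hpo : w p = σ o) (H : IsReducing σ w p q o) :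
    crossingCount σ ((Equiv.swap p q).trans w) A + 1 = crossingCount σ w A := by
  have hsub : ({p, q, o} : Finset (Fin n)) ×ˢ ({p, q, o} : Finset (Fin n)) ⊆ A ×ˢ A := by
    have := h.mem_left
    have := h.mem_right
    apply Finset.product_subset_product <;> grind
  rw [crossingCount, crossingCount, ← Finset.sum_sdiff hsub, ← Finset.sum_sdiff hsub, add_assoc]
  congr 1
  · refine Finset.sum_congr rfl fun ⟨a, b⟩ hab => if_congr ?_ rfl rfl
    simp only [Finset.mem_sdiff, Finset.mem_product, Finset.mem_insert, Finset.mem_singleton,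
      not_and] at hab
    refine h.crosses_swap_iff hA hab.1.1 hab.1.2 (by tauto) fun hb => ?_
    rw [hpo]
    exact val_ne_of_perm σ (by tauto)
  · have := val_ne_of_perm w hop
    have := val_ne_of_perm w hoq
    have := val_ne_of_perm σ hop
    have := val_ne_of_perm σ hoq
    have hlt := h.lt
    have : (w p : ℕ) = σ o := by rw [hpo]
    rw [Finset.sum_product, Finset.sum_product]
    simp only [Finset.sum_insert (show p ∉ ({q, o} : Finset (Fin n)) by simp [h.ne, hop.symm]),
      Finset.sum_insert (show q ∉ ({o} : Finset (Fin n)) by simp [hoq.symm]),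
      Finset.sum_singleton, Equiv.trans_apply, Equiv.swap_apply_left, Equiv.swap_apply_right,
      Equiv.swap_apply_of_ne_of_ne hop hoq]
    rcases H with ⟨h₁, h₂ | h₂, h₃ | h₃⟩ | ⟨h₁, h₂ | h₂, h₃ | h₃⟩ <;>
      simp (disch := omega) only [if_pos, if_neg] <;> rfl

end IsNextStrand

theorem eq_off_swap (hA : ∀ j ∉ A, w j = σ j) (hp : p ∈ A) (hq : q ∈ A) :
    ∀ j ∉ A, (Equiv.swap p q).trans w j = σ j := fun j hj =>
  (swap_trans_apply_of_ne_of_ne (ne_of_mem_of_not_mem hp hj).symm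
    (ne_of_mem_of_not_mem hq hj).symm).trans (hA j hj)

theorem eq_off_erase (hA : ∀ j ∉ A, w j = σ j) (hi : w i = σ i) : ∀ j ∉ A.erase i, w j = σ j := by
  intro j hj
  rcases eq_or_ne j i with rfl | hji
  · exact hi
  · exact hA j fun hjA => hj (Finset.mem_erase.2 ⟨hji, hjA⟩)

/-- One of the three ways to simplify the remaining diagram: finish a strand that is next to its
'out' point, finish `q` by pulling it over its left neighbour, or exchange two neighbours across the
vertical end of a third strand. -/
inductive HasReduction (σ w : Equiv.Perm (Fin n)) (A : Finset (Fin n)) : Prop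
  | fixed (i : Fin n) (mem : i ∈ A) (eq : w i = σ i)
  | free (p q : Fin n) (next : IsNextStrand A w p q) (eq : w p = σ q)
  | swap (p q o : Fin n) (next : IsNextStrand A w p q) (mem : o ∈ A) (eq : w p = σ o)
      (ne_left : o ≠ p) (ne_right : o ≠ q) (reducing : IsReducing σ w p q o)

/-- A strand whose 'in' and 'out' points are nearest to each other encloses no other strand, which
decides how the strands around it cross. -/
theorem hasReduction_of_nonempty (hA : ∀ j ∉ A, w j = σ j) (hne : A.Nonempty) :
    HasReduction σ w A := by
  obtain ⟨i, hi, hmin⟩ := A.exists_min_image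
    (fun i => |2 * ((w i : ℕ) : ℤ) - (2 * ((σ i : ℕ) : ℤ) + 1)|) hne
  simp only [abs_eq_max_neg] at hmin
  rcases lt_trichotomy (w i : ℕ) (σ i) with hlt | heq | hgt
  · obtain ⟨q, h, hqi⟩ := exists_isNextStrand_right hA hi hlt
    obtain ⟨o, ho, hoi⟩ := exists_mem_perm_eq (fun j hj => (hA j hj).symm) hi
    have hval : (σ o : ℕ) = w i := by rw [hoi]
    have hiq := h.lt
    have hminq := hmin q h.mem_right
    have hmino := hmin o ho
    have := val_ne_of_perm σ h.ne
    have hoi' : o ≠ i := by rintro rfl; omega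
    have := val_ne_of_perm w hoi'
    have hoq : o ≠ q := by rintro rfl; omega
    exact .swap i q o h ho hoi.symm hoi' hoq (.inl (by omega))
  · exact .fixed i hi (Fin.ext heq)
  · obtain ⟨p, h, hip⟩ := exists_isNextStrand_left hA hi hgt
    obtain ⟨o, ho, hop⟩ := exists_mem_perm_eq (fun j hj => (hA j hj).symm) h.mem_left
    rcases eq_or_ne o i with rfl | hoi
    · exact .free p o h hop.symm
    have hval : (σ o : ℕ) = w p := by rw [hop]
    have hpi := h.lt
    have hminp := hmin p h.mem_left
    have hmino := hmin o ho
    have := val_ne_of_perm σ h.ne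
    have := val_ne_of_perm w hoi
    have := val_ne_of_perm σ hoi
    have hop' : o ≠ p := by rintro rfl; omega
    exact .swap p i o h ho hop.symm hop' hoi (.inr (by omega))

theorem nonempty_sweep (hA : ∀ j ∉ A, w j = σ j) :
    Nonempty (Sweep σ ⟨A, w⟩ (crossingCount σ w A)) := by
  induction hN : crossingCount σ w A + A.card using Nat.strong_induction_on generalizing A w with
  | _ N ih
  rcases A.eq_empty_or_nonempty with rfl | hne
  · exact ⟨.ofEmpty _ rfl⟩
  have card_lt : ∀ i ∈ A, (A.erase i).card < A.card := fun i => Finset.card_erase_lt_of_mem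
  obtain ⟨i, hi, hwi⟩ | ⟨p, q, h, hpq⟩ | ⟨p, q, o, h, ho, hpo, hop, hoq, hred⟩ :=
    hasReduction_of_nonempty hA hne
  · obtain ⟨S⟩ := ih _ (by have := card_lt i hi; rw [crossingCount_erase hwi]; omega)
      (eq_off_erase hA hwi) rfl
    rw [crossingCount_erase hwi] at S
    exact ⟨S.cons (sweepStep_fixed hi hwi)⟩
  · have hfix : (Equiv.swap p q).trans w q = σ q := by simp [hpq]
    have hcount := (crossingCount_erase hfix).trans (h.crossingCount_swap_of_out_eq hA hpq)
    obtain ⟨S⟩ := ih _ (by have := card_lt q h.mem_right; rw [hcount]; omega)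
      (eq_off_erase (eq_off_swap hA h.mem_left h.mem_right) hfix) rfl
    rw [hcount] at S
    exact ⟨(S.cons (h.sweepStep_erase_swap hA hpq)).cons (h.sweepStep_cap hA hpq)⟩
  · have hcount := h.crossingCount_swap_add_one hA ho hop hoq hpo hred
    obtain ⟨S⟩ := ih _ (by omega) (eq_off_swap hA h.mem_left h.mem_right) rfl
    rw [← hcount]
    exact ⟨((S.cons (h.sweepStep_spread hA)).cons (h.sweepStep_swap ho hpo)).cons
      (h.sweepStep_closeUp hA)⟩

theorem nonempty_sweep_Ncross (σ : Equiv.Perm (Fin n)) :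
    Nonempty (Sweep σ ⟨Finset.univ, id⟩ (Ncross n σ)) :=
  crossingCount_univ_refl (σ := σ) ▸ nonempty_sweep (w := Equiv.refl _) (by simp)

end Sweep

/-! ### Smooth tracks -/

section SmoothStep

theorem hasDerivAt_expNegInvGlue (x : ℝ) :
    HasDerivAt expNegInvGlue (x⁻¹ ^ 2 * expNegInvGlue x) x := by
  simpa using expNegInvGlue.hasDerivAt_polynomial_eval_inv_mul 1 x

theorem smoothTransition_one_sub (x : ℝ) : smoothTransition (1 - x) = 1 - smoothTransition x := by
  rw [smoothTransition, smoothTransition, sub_sub_cancel, add_comm,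
    one_sub_div (smoothTransition.pos_denom x).ne', add_sub_cancel_left]

theorem smoothTransition_half : smoothTransition (1 / 2) = 1 / 2 := by
  have h := smoothTransition_one_sub (1 / 2)
  norm_num at h ⊢
  linarith

theorem hasDerivAt_smoothTransition (x : ℝ) :
    HasDerivAt smoothTransition (deriv smoothTransition x) x :=
  (smoothTransition.contDiff (n := 1).differentiable one_ne_zero x).hasDerivAt

theorem deriv_smoothTransition_pos {x : ℝ} (hx : x ∈ Ioo (0 : ℝ) 1) :
    0 < deriv smoothTransition x := by
  have hf := hasDerivAt_expNegInvGlue x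
  have hg := (hasDerivAt_expNegInvGlue (1 - x)).comp x ((hasDerivAt_id x).const_sub 1)
  have h := hf.div (hf.add hg) (smoothTransition.pos_denom x).ne'
  have hx' : 0 < 1 - x := sub_pos.2 hx.2
  have hpos := expNegInvGlue.pos_of_pos hx.1
  have hpos' := expNegInvGlue.pos_of_pos hx'
  refine (h.deriv.symm ▸ div_pos ?_ (pow_pos (smoothTransition.pos_denom x) 2) :)
  have hx₀ := hx.1
  calc
    0 < (x⁻¹ ^ 2 + (1 - x)⁻¹ ^ 2) * (expNegInvGlue x * expNegInvGlue (1 - x)) := by positivity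
    _ = _ := by simp; ring

theorem strictMonoOn_smoothTransition : StrictMonoOn smoothTransition (Icc 0 1) :=
  strictMonoOn_of_deriv_pos (convex_Icc 0 1) smoothTransition.continuous.continuousOn fun x hx =>
    deriv_smoothTransition_pos (by rwa [interior_Icc] at hx)

theorem eq_half_of_smoothTransition_eq_half {x : ℝ} (hx : x ∈ Icc (0 : ℝ) 1)
    (h : smoothTransition x = 1 / 2) : x = 1 / 2 :=
  strictMonoOn_smoothTransition.injOn hx (by norm_num) (h.trans smoothTransition_half.symm)

end SmoothStep

section Track

variable {a : ℕ → ℝ} {T k : ℕ} {b t t' y : ℝ}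

/-- The smooth curve `x = ascent a T y` that is at `a k` at height `k ≤ T` and stays at `a T`
above. -/
def ascent (a : ℕ → ℝ) (T : ℕ) (y : ℝ) : ℝ :=
  a 0 + ∑ k ∈ Finset.range T, (a (k + 1) - a k) * smoothTransition (y - k)

theorem ascent_of_le (h : T ≤ y) : ascent a T y = a T := by
  have hsum : ∑ k ∈ Finset.range T, (a (k + 1) - a k) * smoothTransition (y - k) =
      ∑ k ∈ Finset.range T, (a (k + 1) - a k) := by
    refine Finset.sum_congr rfl fun k hk => ?_
    have hkT : ((k + 1 : ℕ) : ℝ) ≤ T := Nat.cast_le.2 (Finset.mem_range.1 hk)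
    push_cast at hkT
    rw [smoothTransition.one_of_one_le (by linarith), mul_one]
  rw [ascent, hsum, Finset.sum_range_sub, add_sub_cancel]

theorem ascent_eq_of_le (hk : k ≤ T) (h : y ≤ k) : ascent a T y = ascent a k y := by
  refine congrArg (a 0 + ·) (Finset.sum_subset (Finset.range_subset_range.2 hk) ?_).symm
  intro m _ hm
  have hkm : (k : ℝ) ≤ m := Nat.cast_le.2 (not_lt.1 (mt Finset.mem_range.2 hm))
  rw [smoothTransition.zero_of_nonpos (by linarith), mul_zero]

theorem ascent_eq_lineMap (hk : k < T) (h : y ∈ Icc (k : ℝ) (k + 1)) :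
    ascent a T y = AffineMap.lineMap (a k) (a (k + 1)) (smoothTransition (y - k)) := by
  have hsucc : ascent a (k + 1) y =
      ascent a k y + (a (k + 1) - a k) * smoothTransition (y - k) := by
    rw [ascent, ascent, Finset.sum_range_succ, add_assoc]
  rw [ascent_eq_of_le hk (by simpa using h.2), hsucc, ascent_of_le h.1,
    AffineMap.lineMap_apply_ring']
  ring

theorem contDiff_ascent : ContDiff ℝ ∞ (ascent a T) :=
  contDiff_const.add <| ContDiff.sum fun _ _ => contDiff_const.mul <|
    smoothTransition.contDiff.comp (contDiff_id.sub contDiff_const)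

theorem exists_nat_lt_le_add_one (h₀ : 0 < y) : ∃ k : ℕ, (k : ℝ) < y ∧ y ≤ k + 1 := by
  obtain ⟨k, hk⟩ := Nat.exists_eq_succ_of_ne_zero (Nat.ceil_pos.2 h₀).ne'
  refine ⟨k, Nat.lt_ceil.1 (by omega), ?_⟩
  have hle := Nat.le_ceil y
  rwa [hk, Nat.cast_succ] at hle

/-- The height of a strand that turns around at height `T + 1`. -/
def height (T : ℕ) (t : ℝ) : ℝ := 4 * (T + 1) * t * (1 - t)

/-- The signed parameter `u` for which the height is `T + 1 - u ^ 2`. -/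
def apexCoord (T : ℕ) (t : ℝ) : ℝ := √(T + 1) * (2 * t - 1)

theorem apexCoord_sq : apexCoord T t ^ 2 = T + 1 - height T t := by
  have hT : √(T + 1 : ℝ) ^ 2 = T + 1 := sq_sqrt (by positivity)
  rw [apexCoord, height, mul_pow, hT]
  ring

theorem height_le : height T t ≤ T + 1 := by
  have := apexCoord_sq (T := T) (t := t)
  nlinarith [sq_nonneg (apexCoord T t)]

theorem height_nonneg (ht : t ∈ Icc (0 : ℝ) 1) : 0 ≤ height T t :=
  mul_nonneg (mul_nonneg (by positivity) ht.1) (sub_nonneg.2 ht.2)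

theorem height_pos (ht : t ∈ Ioo (0 : ℝ) 1) : 0 < height T t :=
  mul_pos (mul_pos (by positivity) ht.1) (sub_pos.2 ht.2)

theorem height_one_sub : height T (1 - t) = height T t := by
  unfold height
  ring

theorem exists_lt_half_height_eq (hy : y ∈ Ioo (0 : ℝ) (T + 1)) :
    ∃ t ∈ Ioo (0 : ℝ) (1 / 2), height T t = y := by
  have h₀ : height T 0 = 0 := by simp [height]
  have h₁ : height T (1 / 2) = T + 1 := by rw [height]; ring
  have hcont : Continuous (height T) := by unfold height; fun_prop
  refine intermediate_value_Ioo (by norm_num) hcont.continuousOn ?_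
  rwa [h₀, h₁]

theorem height_eq_height (h : height T t = height T t') : t = t' ∨ t + t' = 1 := by
  have hfactor : 4 * (T + 1 : ℝ) * ((t - t') * (1 - (t + t'))) = 0 := by
    unfold height at h
    linear_combination h
  have hT : 4 * (T + 1 : ℝ) ≠ 0 := by positivity
  refine (mul_eq_zero.1 ((mul_eq_zero.1 hfactor).resolve_left hT)).imp sub_eq_zero.1 fun h => ?_
  exact (sub_eq_zero.1 h).symm

theorem hasDerivAt_height (T : ℕ) (t : ℝ) :
    HasDerivAt (height T) (4 * (T + 1) * (1 - 2 * t)) t := by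
  refine (((hasDerivAt_id t).const_mul (4 * (T + 1 : ℝ))).mul
    ((hasDerivAt_id t).const_sub 1)).congr_deriv ?_
  simp only [id]
  ring

theorem contDiff_height : ContDiff ℝ ∞ (height T) :=
  (contDiff_const.mul contDiff_id).mul (contDiff_const.sub contDiff_id)

/-- A smooth step in time from `0` to `1`, which takes place while the strand is above height
`T`. -/
def bend (T : ℕ) (t : ℝ) : ℝ := smoothTransition ((1 + apexCoord T t) / 2)

theorem strictMono_apexCoord : StrictMono (apexCoord T) := fun _ _ h =>
  mul_lt_mul_of_pos_left (by linarith) (sqrt_pos.2 (by positivity))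

theorem apexCoord_half : apexCoord T (1 / 2) = 0 := by
  norm_num [apexCoord]

theorem bend_of_lt_half (ht : t < 1 / 2) (h : height T t ≤ T) : bend T t = 0 := by
  have hneg := strictMono_apexCoord (T := T) ht
  rw [apexCoord_half] at hneg
  have hsq := apexCoord_sq (T := T) (t := t)
  exact smoothTransition.zero_of_nonpos (by nlinarith)

theorem bend_of_half_le (ht : 1 / 2 ≤ t) (h : height T t ≤ T) : bend T t = 1 := by
  have hpos := strictMono_apexCoord (T := T).monotone ht
  rw [apexCoord_half] at hpos
  have hsq := apexCoord_sq (T := T) (t := t)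
  exact smoothTransition.one_of_one_le (by nlinarith)

theorem apexCoord_mem_Ioo (h : T < height T t) : apexCoord T t ∈ Ioo (-1 : ℝ) 1 := by
  rw [mem_Ioo, ← abs_lt, ← sq_lt_one_iff_abs_lt_one, apexCoord_sq]
  linarith

theorem bend_mem_Ioo (h : T < height T t) : bend T t ∈ Ioo (0 : ℝ) 1 := by
  obtain ⟨hl, hr⟩ := apexCoord_mem_Ioo h
  exact ⟨smoothTransition.pos_of_pos (by linarith), smoothTransition.lt_one_of_lt_one (by linarith)⟩

theorem bend_injective_above (h : T < height T t) (h' : T < height T t')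
    (heq : bend T t = bend T t') : t = t' := by
  obtain ⟨hl, hr⟩ := apexCoord_mem_Ioo h
  obtain ⟨hl', hr'⟩ := apexCoord_mem_Ioo h'
  refine strictMono_apexCoord.injective (?_ : apexCoord T t = apexCoord T t')
  have := strictMonoOn_smoothTransition.injOn ⟨by linarith, by linarith⟩
    ⟨by linarith, by linarith⟩ heq
  linarith

theorem bend_mem_Icc : bend T t ∈ Icc (0 : ℝ) 1 :=
  ⟨smoothTransition.nonneg _, smoothTransition.le_one _⟩

theorem exists_pos_hasDerivAt_bend_half : ∃ s, 0 < s ∧ HasDerivAt (bend T) s (1 / 2) := by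
  have hu : HasDerivAt (fun t => (1 + apexCoord T t) / 2) (√(T + 1)) (1 / 2) := by
    refine ((((((hasDerivAt_id (1 / 2 : ℝ)).const_mul 2).sub_const 1).const_mul
      (√(T + 1 : ℝ))).const_add 1).div_const 2).congr_deriv ?_
    ring
  have hmid : (1 + apexCoord T (1 / 2)) / 2 ∈ Ioo (0 : ℝ) 1 := by
    norm_num [apexCoord_half]
  exact ⟨_, mul_pos (deriv_smoothTransition_pos hmid) (sqrt_pos.2 (by positivity)),
    (hasDerivAt_smoothTransition _).comp _ hu⟩

theorem contDiff_bend : ContDiff ℝ ∞ (bend T) :=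
  smoothTransition.contDiff.comp <| (contDiff_const.add
    (contDiff_const.mul ((contDiff_const.mul contDiff_id).sub contDiff_const))).div_const 2

/-- The horizontal coordinate of a strand that ascends through the positions `a` up to height `T`
and, after turning around, descends along the line at `b`. -/
def track (a : ℕ → ℝ) (T : ℕ) (b t : ℝ) : ℝ :=
  AffineMap.lineMap (ascent a T (height T t)) b (bend T t)

theorem track_of_lt_half (ht : t < 1 / 2) (hk : k < T) (h : height T t ∈ Icc (k : ℝ) (k + 1)) :
    track a T b t =
      AffineMap.lineMap (a k) (a (k + 1)) (smoothTransition (height T t - k)) := by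
  have hkT : ((k + 1 : ℕ) : ℝ) ≤ T := Nat.cast_le.2 hk
  rw [Nat.cast_succ] at hkT
  rw [track, bend_of_lt_half ht (h.2.trans hkT), AffineMap.lineMap_apply_zero,
    ascent_eq_lineMap hk h]

theorem track_of_half_le (ht : 1 / 2 ≤ t) (h : height T t ≤ T) : track a T b t = b := by
  rw [track, bend_of_half_le ht h, AffineMap.lineMap_apply_one]

theorem track_above (h : T ≤ height T t) :
    track a T b t = AffineMap.lineMap (a T) b (bend T t) := by
  rw [track, ascent_of_le h]

theorem track_zero : track a T b 0 = a 0 := by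
  have h₀ : height T 0 = 0 := by simp [height]
  rw [track, bend_of_lt_half (by norm_num) (by simp [h₀]), AffineMap.lineMap_apply_zero, h₀,
    ascent_eq_of_le T.zero_le (by simp), ascent_of_le (by simp)]

theorem track_one : track a T b 1 = b :=
  track_of_half_le (by norm_num) (by simp [height])

theorem ascent_mem {s : Set ℝ} (hs : Convex ℝ s) (ha : ∀ k, a k ∈ s) (hy : 0 ≤ y) :
    ascent a T y ∈ s := by
  rcases le_or_gt (T : ℝ) y with h | h
  · exact ascent_of_le h ▸ ha T
  · rw [ascent_eq_lineMap ((Nat.floor_lt hy).2 h) ⟨Nat.floor_le hy, (Nat.lt_floor_add_one y).le⟩]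
    exact hs.lineMap_mem (ha _) (ha _) ⟨smoothTransition.nonneg _, smoothTransition.le_one _⟩

theorem track_mem {s : Set ℝ} (hs : Convex ℝ s) (ha : ∀ k, a k ∈ s) (hb : b ∈ s)
    (ht : t ∈ Icc (0 : ℝ) 1) : track a T b t ∈ s :=
  hs.lineMap_mem (ascent_mem hs ha (height_nonneg ht)) hb bend_mem_Icc

theorem contDiff_track : ContDiff ℝ ∞ (track a T b) := by
  have h : track a T b = fun t =>
      bend T t * (b - ascent a T (height T t)) + ascent a T (height T t) :=
    funext fun t => AffineMap.lineMap_apply_ring' _ _ _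
  rw [h]
  have hf := (contDiff_ascent (a := a) (T := T)).comp (contDiff_height (T := T))
  exact (contDiff_bend.mul (contDiff_const.sub hf)).add hf

theorem deriv_track_half_ne_zero (hab : a T ≠ b) : deriv (track a T b) (1 / 2) ≠ 0 := by
  obtain ⟨s, hs, hbend⟩ := exists_pos_hasDerivAt_bend_half (T := T)
  have hhalf : height T (1 / 2) = T + 1 := by rw [height]; ring
  have hev : track a T b =ᶠ[𝓝 (1 / 2)] fun t => bend T t * (b - a T) + a T := by
    have : ∀ᶠ t in 𝓝 (1 / 2), (T : ℝ) < height T t :=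
      contDiff_height.continuous.continuousAt.eventually_const_lt (by rw [hhalf]; linarith)
    filter_upwards [this] with t ht
    rw [track_above ht.le, AffineMap.lineMap_apply_ring']
  rw [hev.deriv_eq, ((hbend.mul_const (b - a T)).add_const (a T)).deriv]
  exact mul_ne_zero hs.ne' (sub_ne_zero.2 hab.symm)

end Track

/-! ### Polar coordinates -/

section PolarChart

variable {n : ℕ} {x x' y y' : ℝ}

theorem inner_unitPt (θ φ : ℝ) : ⟪unitPt θ, unitPt φ⟫ = cos (θ - φ) := by
  simp [unitPt, PiLp.inner_apply, Fin.sum_univ_two, cos_sub, mul_comm]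

theorem norm_unitPt (θ : ℝ) : ‖unitPt θ‖ = 1 := by
  rw [← sq_eq_sq₀ (norm_nonneg _) zero_le_one, ← real_inner_self_eq_norm_sq, inner_unitPt, sub_self,
    cos_zero, one_pow]

theorem unitPt_eq_unitPt_iff {θ φ : ℝ} (h : |θ - φ| < 2 * π) :
    unitPt θ = unitPt φ ↔ θ = φ := by
  rw [← inner_eq_one_iff_of_norm_eq_one (norm_unitPt θ) (norm_unitPt φ) (𝕜 := ℝ), inner_unitPt,
    cos_eq_one_iff_of_lt_of_lt (abs_lt.1 h).1 (abs_lt.1 h).2, sub_eq_zero]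

theorem hasDerivAt_unitPt (θ : ℝ) : HasDerivAt unitPt (unitPt (θ + π / 2)) θ := by
  have hpi : HasDerivAt (fun θ => ![cos θ, sin θ]) ![cos (θ + π / 2), sin (θ + π / 2)] θ := by
    rw [cos_add_pi_div_two, sin_add_pi_div_two]
    exact hasDerivAt_pi.2 (Fin.forall_fin_two.2 ⟨hasDerivAt_cos θ, hasDerivAt_sin θ⟩)
  exact (PiLp.hasFDerivAt_toLp 2 _).comp_hasDerivAt θ hpi

theorem contDiff_unitPt : ContDiff ℝ ∞ unitPt := by
  rw [contDiff_euclidean]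
  intro i
  fin_cases i
  · exact contDiff_cos
  · exact contDiff_sin

/-- The universal cover of the punctured disk by the upper half plane: the marked point `v_k` is
the image of `(k, 0)`. -/
def polarChart (n : ℕ) (x y : ℝ) : Plane := exp (-y) • unitPt (x * π / n)

/-- The differential of `polarChart n` at `(x, y)`. -/
def polarTangent (n : ℕ) (x y : ℝ) : ℝ × ℝ →ₗ[ℝ] Plane :=
  exp (-y) • ((LinearMap.fst ℝ ℝ ℝ).smulRight ((π / n) • unitPt (x * π / n + π / 2)) -
    (LinearMap.snd ℝ ℝ ℝ).smulRight (unitPt (x * π / n)))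

theorem polarTangent_apply (v : ℝ × ℝ) : polarTangent n x y v =
    exp (-y) • (v.1 • (π / n) • unitPt (x * π / n + π / 2) - v.2 • unitPt (x * π / n)) := rfl

theorem norm_polarChart : ‖polarChart n x y‖ = exp (-y) := by
  rw [polarChart, norm_smul, norm_unitPt, mul_one, norm_of_nonneg (exp_pos _).le]

theorem polarChart_eq_iff (hn : 0 < n) (hx : x ∈ Icc (0 : ℝ) (2 * n - 1))
    (hx' : x' ∈ Icc (0 : ℝ) (2 * n - 1)) :
    polarChart n x y = polarChart n x' y' ↔ x = x' ∧ y = y' := by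
  refine ⟨fun h => ?_, fun h => by rw [h.1, h.2]⟩
  have hy : y = y' := by simpa [norm_polarChart] using congrArg norm h
  subst hy
  refine ⟨?_, rfl⟩
  have : (0 : ℝ) < n := Nat.cast_pos.2 hn
  have hangle : |x * π / n - x' * π / n| < 2 * π := by
    have hfactor : x * π / n - x' * π / n = (x - x') / (2 * n) * (2 * π) := by
      field_simp
    rw [hfactor, abs_mul, abs_of_pos two_pi_pos]
    refine mul_lt_of_lt_one_left two_pi_pos ?_
    rw [abs_div, abs_of_pos (by positivity : 0 < 2 * (n : ℝ)), div_lt_one (by positivity), abs_lt]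
    constructor <;> linarith [hx.1, hx.2, hx'.1, hx'.2]
  have heq := (unitPt_eq_unitPt_iff hangle).1 (smul_right_injective _ (exp_pos (-y)).ne' h)
  field_simp at heq
  exact heq

theorem hasDerivAt_polarChart {f g : ℝ → ℝ} {f' g' t : ℝ} (hf : HasDerivAt f f' t)
    (hg : HasDerivAt g g' t) :
    HasDerivAt (fun t => polarChart n (f t) (g t)) (polarTangent n (f t) (g t) (f', g')) t := by
  have hθ : HasDerivAt (fun t => f t * π / n) (f' * π / n) t := (hf.mul_const π).div_const _
  refine (hg.neg.exp.smul ((hasDerivAt_unitPt _).scomp t hθ)).congr_deriv ?_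
  simp only [polarTangent_apply, Function.comp_apply, Pi.neg_apply]
  module

theorem contDiff_polarChart {f g : ℝ → ℝ} (hf : ContDiff ℝ ∞ f) (hg : ContDiff ℝ ∞ g) :
    ContDiff ℝ ∞ fun t => polarChart n (f t) (g t) :=
  hg.neg.exp.smul (contDiff_unitPt.comp ((hf.mul contDiff_const).div_const _))

theorem inner_polarTangent_polarChart (v : ℝ × ℝ) :
    ⟪polarTangent n x y v, polarChart n x y⟫ = -(exp (-y) ^ 2 * v.2) := by
  rw [polarTangent_apply, polarChart]
  simp only [inner_smul_left, inner_smul_right, inner_sub_left, inner_unitPt]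
  simp
  ring

theorem ker_polarTangent (hn : 0 < n) : LinearMap.ker (polarTangent n x y) = ⊥ := by
  rw [LinearMap.ker_eq_bot']
  intro v hv
  have hsnd : v.2 = 0 := by
    have h := inner_polarTangent_polarChart (n := n) (x := x) (y := y) v
    rw [hv, inner_zero_left] at h
    simpa using h
  rw [polarTangent_apply, hsnd, zero_smul, sub_zero] at hv
  have hne : unitPt (x * π / n + π / 2) ≠ 0 := norm_ne_zero_iff.1 (by simp [norm_unitPt])
  have hfst : v.1 = 0 := by simpa [hn.ne', pi_ne_zero, hne] using hv
  exact Prod.ext hfst hsnd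

theorem linearIndependent_polarTangent (hn : 0 < n) {v w : ℝ × ℝ} (h : v.1 * w.2 ≠ v.2 * w.1) :
    LinearIndependent ℝ ![polarTangent n x y v, polarTangent n x y w] := by
  rw [LinearIndependent.pair_iff]
  intro a b hab
  rw [← map_smul, ← map_smul, ← map_add] at hab
  have hker := LinearMap.ker_eq_bot'.1 (ker_polarTangent hn) _ hab
  have h₁ : a * v.1 + b * w.1 = 0 := congrArg Prod.fst hker
  have h₂ : a * v.2 + b * w.2 = 0 := congrArg Prod.snd hker
  have hdet := sub_ne_zero.2 h
  exact ⟨(mul_eq_zero.1 (by linear_combination w.2 * h₁ - w.1 * h₂)).resolve_right hdet,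
    (mul_eq_zero.1 (by linear_combination v.1 * h₂ - v.2 * h₁)).resolve_right hdet⟩

end PolarChart

/-! ### Motion of the branches between slices -/

section SweepStep

variable {n : ℕ} {σ : Equiv.Perm (Fin n)} {s s' : SweepState n} {b : Bool} {i j p q o : Fin n}
  {u v : Fin n ⊕ Fin n} {r : ℝ}

theorem SweepState.inl_mem_branches : Sum.inl j ∈ s.branches ↔ j ∈ s.active :=
  Finset.inl_mem_disjSum

theorem SweepState.inr_mem_branches : Sum.inr j ∈ s.branches ↔ j ∈ s.active :=
  Finset.inr_mem_disjSum

theorem SweepState.lane_le (s : SweepState n) (u : Fin n ⊕ Fin n) : s.lane σ u + 1 ≤ 2 * n := by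
  obtain j | j := u <;> simp only [SweepState.lane, Sum.elim_inl, Sum.elim_inr] <;> omega

theorem SweepState.lane_inl_ne_lane_inr (s : SweepState n) :
    s.lane σ (.inl i) ≠ s.lane σ (.inr j) := by
  rw [SweepState.lane, Sum.elim_inl, Sum.elim_inr]
  omega

namespace IsTripleSwap

theorem lane_eq (h : IsTripleSwap σ s s' p q o) :
    s'.lane σ = s.lane σ ∘ Sum.map (Equiv.swap p q) id := by
  funext u
  cases u <;> simp [SweepState.lane, h.slot_eq]

theorem lane_left (h : IsTripleSwap σ s s' p q o) : s.lane σ (.inl p) = 2 * σ o :=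
  congrArg (2 * ·) h.slot_left

theorem lane_right (h : IsTripleSwap σ s s' p q o) : s.lane σ (.inl q) = 2 * σ o + 2 :=
  congrArg (2 * ·) h.slot_right

theorem lane_cases (h : IsTripleSwap σ s s' p q o) (hs : InjOn (s.lane σ) s.branches)
    (hu : u ∈ s.branches) :
    (u = .inl p ∧ s.lane σ u = 2 * σ o ∧ s'.lane σ u = 2 * σ o + 2) ∨
    (u = .inl q ∧ s.lane σ u = 2 * σ o + 2 ∧ s'.lane σ u = 2 * σ o) ∨
    (u = .inr o ∧ s.lane σ u = 2 * σ o + 1 ∧ s'.lane σ u = 2 * σ o + 1) ∨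
    s'.lane σ u = s.lane σ u ∧ (s.lane σ u < 2 * σ o ∨ 2 * σ o + 2 < s.lane σ u) := by
  have hp := h.lane_left
  have hq := h.lane_right
  have ho : s.lane σ (.inr o) = 2 * σ o + 1 := rfl
  have ne_of_ne : ∀ v ∈ s.branches, u ≠ v → s.lane σ u ≠ s.lane σ v := fun v hv =>
    mt (hs hu hv)
  by_cases hup : u = .inl p
  · simp_all [h.lane_eq]
  by_cases huq : u = .inl q
  · simp_all [h.lane_eq]
  by_cases huo : u = .inr o
  · simp_all [h.lane_eq]
  have h₁ := ne_of_ne _ (SweepState.inl_mem_branches.2 h.mem_left) hup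
  have h₂ := ne_of_ne _ (SweepState.inl_mem_branches.2 h.mem_right) huq
  have h₃ := ne_of_ne _ (SweepState.inr_mem_branches.2 h.mem_out) huo
  have hstay : Sum.map (Equiv.swap p q) id u = u := by
    obtain j | j := u
    · rw [Sum.inl.injEq] at hup huq
      exact congrArg Sum.inl (Equiv.swap_apply_of_ne_of_ne hup huq)
    · rfl
  exact .inr (.inr (.inr ⟨by rw [h.lane_eq, Function.comp_apply, hstay], by omega⟩))

theorem lineMap_lane_cases (h : IsTripleSwap σ s s' p q o) (hs : InjOn (s.lane σ) s.branches)
    (hu : u ∈ s.branches) {x : ℝ} (hx : x = AffineMap.lineMap (s.lane σ u : ℝ) (s'.lane σ u) r) :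
    (u = .inl p ∧ x = 2 * σ o + 2 * r) ∨ (u = .inl q ∧ x = 2 * σ o + 2 - 2 * r) ∨
    (u = .inr o ∧ x = 2 * σ o + 1) ∨
    x = s.lane σ u ∧ (x + 1 ≤ 2 * σ o ∨ 2 * σ o + 3 ≤ x) := by
  rw [AffineMap.lineMap_apply_ring'] at hx
  obtain ⟨rfl, hu₀, hu₁⟩ | ⟨rfl, hu₀, hu₁⟩ | ⟨rfl, hu₀, hu₁⟩ | ⟨hu₁, hu₀⟩ := h.lane_cases hs hu
  · refine .inl ⟨rfl, ?_⟩
    rw [hx, hu₀, hu₁]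
    push_cast
    ring
  · refine .inr (.inl ⟨rfl, ?_⟩)
    rw [hx, hu₀, hu₁]
    push_cast
    ring
  · refine .inr (.inr (.inl ⟨rfl, ?_⟩))
    rw [hx, hu₀, hu₁]
    push_cast
    ring
  · rw [hu₁, sub_self, mul_zero, zero_add] at hx
    exact .inr (.inr (.inr ⟨hx, hu₀.imp (fun h => hx ▸ mod_cast h) fun h => hx ▸ mod_cast h⟩))

theorem eq_half_of_lineMap_lane_eq (h : IsTripleSwap σ s s' p q o)
    (hs : InjOn (s.lane σ) s.branches) (hu : u ∈ s.branches) (hv : v ∈ s.branches) (huv : u ≠ v)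
    (hr : r ∈ Icc (0 : ℝ) 1) {x : ℝ}
    (hxu : x = AffineMap.lineMap (s.lane σ u : ℝ) (s'.lane σ u) r)
    (hxv : x = AffineMap.lineMap (s.lane σ v : ℝ) (s'.lane σ v) r) :
    r = 1 / 2 ∧ x = 2 * σ o + 1 := by
  obtain ⟨hr₀, hr₁⟩ := hr
  have lane_ne : (s.lane σ u : ℝ) ≠ s.lane σ v := fun heq => huv (hs hu hv (Nat.cast_injective heq))
  have hcu := h.lineMap_lane_cases hs hu hxu
  have hcv := h.lineMap_lane_cases hs hv hxv
  clear hxu hxv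
  grind

end IsTripleSwap

namespace SweepStep

theorem active_subset (h : SweepStep σ b s s') : s'.active ⊆ s.active := by
  cases h with
  | isotopy h => exact h.subset
  | cap i mem h => exact h ▸ Finset.erase_subset _ _
  | swap p q o h => exact h.active_eq.subset

theorem branches_subset (h : SweepStep σ b s s') : s'.branches ⊆ s.branches :=
  Finset.disjSum_mono h.active_subset h.active_subset

theorem injOn_lane (h : SweepStep σ b s s') (hs : InjOn (s.lane σ) s.branches) :
    InjOn (s'.lane σ) s'.branches := by
  intro u hu v hv heq
  have hu' := h.branches_subset hu
  have hv' := h.branches_subset hv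
  cases h with
  | isotopy _ hlt =>
    refine hs hu' hv' ?_
    have := hlt u hu' v hv'
    have := hlt v hv' u hu'
    omega
  | cap _ _ _ hslot =>
    rw [SweepState.lane, hslot] at heq
    exact hs hu' hv' heq
  | swap p q o h =>
    have hinj := @hs u hu' v hv'
    have hcu := h.lane_cases hs hu'
    have hcv := h.lane_cases hs hv'
    clear hs
    grind

theorem injOn_lineMap_lane (h : SweepStep σ false s s') (hs : InjOn (s.lane σ) s.branches)
    (hr : r ∈ Icc (0 : ℝ) 1) :
    InjOn (fun u => (AffineMap.lineMap (s.lane σ u : ℝ) (s'.lane σ u) r : ℝ)) s'.branches := by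
  have lineMap_lt : ∀ u ∈ s'.branches, ∀ v ∈ s'.branches, s.lane σ u < s.lane σ v →
      (AffineMap.lineMap (s.lane σ u : ℝ) (s'.lane σ u) r : ℝ) <
        AffineMap.lineMap (s.lane σ v : ℝ) (s'.lane σ v) r := by
    intro u hu v hv hlt
    refine lineMap_strict_mono_endpoints (Nat.cast_lt.2 hlt) (Nat.cast_lt.2 ?_) hr.1 hr.2
    have hu' := h.branches_subset hu
    have hv' := h.branches_subset hv
    cases h with
    | isotopy _ hiff => exact (hiff u hu' v hv').1 hlt
    | cap _ _ _ hslot => rwa [SweepState.lane, hslot]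
  intro u hu v hv heq
  refine hs (h.branches_subset hu) (h.branches_subset hv) ?_
  rcases lt_trichotomy (s.lane σ u) (s.lane σ v) with hlt | hlt | hlt
  · exact absurd heq (lineMap_lt u hu v hv hlt).ne
  · exact hlt
  · exact absurd heq (lineMap_lt v hv u hu hlt).ne'

theorem lineMap_lane_ne (h : SweepStep σ b s s') (hs : InjOn (s.lane σ) s.branches)
    (hu : u ∈ s'.branches) (hi : i ∈ s.active) (hi' : i ∉ s'.active) {r' : ℝ}
    (hr' : r' ∈ Ioo (0 : ℝ) 1) :
    (AffineMap.lineMap (s.lane σ u : ℝ) (s'.lane σ u) r : ℝ) ≠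
      AffineMap.lineMap (s.lane σ (.inl i) : ℝ) (s.lane σ (.inr i)) r' := by
  have hu₀ := h.branches_subset hu
  cases h with
  | isotopy hactive => exact absurd (hactive ▸ hi) hi'
  | swap p q o h => exact absurd (h.active_eq ▸ hi) hi'
  | cap i' mem hactive hslot hiff =>
    obtain rfl : i = i' := by
      by_contra hne
      exact hi' (hactive ▸ Finset.mem_erase.2 ⟨hne, hi⟩)
    have lane_ne : ∀ v ∈ s.branches, v ∉ s'.branches → (s.lane σ u : ℝ) ≠ s.lane σ v :=
      fun v hv hv' heq => hv' (hs hu₀ hv (Nat.cast_injective heq) ▸ hu)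
    have hl := lane_ne (.inl i) (by simpa [SweepState.branches]) (by simpa [SweepState.branches])
    have hr := lane_ne (.inr i) (by simpa [SweepState.branches]) (by simpa [SweepState.branches])
    have hlt : (s.lane σ u : ℝ) < s.lane σ (.inl i) ↔ (s.lane σ u : ℝ) < s.lane σ (.inr i) := by
      exact_mod_cast hiff u hu
    obtain ⟨hr₀, hr₁⟩ := hr'
    have hstay : s'.lane σ u = s.lane σ u := by rw [SweepState.lane, SweepState.lane, hslot]
    rw [hstay, AffineMap.lineMap_same_apply, AffineMap.lineMap_apply_ring']
    intro heq
    rcases hl.lt_or_gt with h | h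
    · have := hlt.1 h
      nlinarith
    · have := hr.lt_or_gt.resolve_left (mt hlt.2 h.not_gt)
      nlinarith

theorem eq_of_notMem_active (h : SweepStep σ b s s') (hi : i ∈ s.active) (hi' : i ∉ s'.active)
    (hj : j ∈ s.active) (hj' : j ∉ s'.active) : i = j := by
  cases h with
  | isotopy hactive => exact absurd (hactive ▸ hi) hi'
  | swap p q o h => exact absurd (h.active_eq ▸ hi) hi'
  | cap _ _ hactive =>
    simp only [hactive, Finset.mem_erase] at hi' hj'
    by_contra hne
    simp_all

theorem exists_isTripleSwap (h : SweepStep σ true s s') : ∃ p q o, IsTripleSwap σ s s' p q o := by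
  cases h with
  | swap p q o h => exact ⟨p, q, o, h⟩

end SweepStep

end SweepStep

section Strand

variable {n c k : ℕ} {σ : Equiv.Perm (Fin n)} {s₀ : SweepState n} {j j' p q o : Fin n}
  {t t' : ℝ}

/-- The branch of the strand `j` that is traversed at time `t`; a strand turns around at time
`1 / 2`. -/
def branch (j : Fin n) (t : ℝ) : Fin n ⊕ Fin n := if t < 1 / 2 then .inl j else .inr j

theorem branch_of_lt_half (ht : t < 1 / 2) : branch j t = .inl j := if_pos ht

theorem branch_of_half_le (ht : 1 / 2 ≤ t) : branch j t = .inr j := if_neg ht.not_gt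

theorem eq_of_branch_eq_of_height_eq {T : Fin n → ℕ} (hbranch : branch j t = branch j' t')
    (hheight : height (T j) t = height (T j') t') : j = j' ∧ t = t' := by
  rcases lt_or_ge t (1 / 2) with ht | ht <;> rcases lt_or_ge t' (1 / 2) with ht' | ht' <;>
    simp only [branch_of_lt_half, branch_of_half_le, ht, ht', reduceCtorEq, Sum.inl.injEq,
      Sum.inr.injEq] at hbranch <;>
    subst hbranch <;>
    exact ⟨rfl, (height_eq_height hheight).elim id fun h => by linarith⟩

theorem SweepState.branch_mem_branches {s : SweepState n} (hj : j ∈ s.active) :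
    branch j t ∈ s.branches := by
  rcases lt_or_ge t (1 / 2) with ht | ht
  · exact branch_of_lt_half (j := j) ht ▸ SweepState.inl_mem_branches.2 hj
  · exact branch_of_half_le (j := j) ht ▸ SweepState.inr_mem_branches.2 hj

theorem SweepState.lane_univ_id_injective (σ : Equiv.Perm (Fin n)) :
    Function.Injective ((⟨Finset.univ, id⟩ : SweepState n).lane σ) := by
  rintro (i | i) (j | j) h <;>
    simp only [SweepState.lane, Sum.elim_inl, Sum.elim_inr, id] at h
  · exact congrArg Sum.inl (Fin.ext (by omega))
  · omega
  · omega
  · exact congrArg Sum.inr (σ.injective (Fin.ext (by omega)))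

namespace Sweep

section ExitTime

variable (S : Sweep σ s₀ c)

theorem antitone_active : Antitone fun k => (S.state k).active :=
  antitone_nat_of_succ_le fun k => (S.step k).active_subset

theorem exists_notMem_active (j : Fin n) : ∃ k, j ∉ (S.state (k + 1)).active :=
  ⟨S.length, fun hj => by simpa [S.active_length] using S.antitone_active S.length.le_succ hj⟩

open Classical in
/-- The number of the step in which the strand `j` turns around. -/
def exitTime (j : Fin n) : ℕ := Nat.find (S.exists_notMem_active j)

open Classical in
theorem mem_active_iff (hj : j ∈ s₀.active) : j ∈ (S.state k).active ↔ k ≤ S.exitTime j := by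
  obtain _ | k := k
  · simp [S.state_zero, hj]
  · rw [Nat.succ_le_iff, exitTime, Nat.lt_find_iff]
    simp only [not_not]
    exact ⟨fun h m hm => S.antitone_active (Nat.succ_le_succ hm) h, fun h => h k le_rfl⟩

theorem injOn_lane (hs₀ : InjOn (s₀.lane σ) s₀.branches) (k : ℕ) :
    InjOn ((S.state k).lane σ) (S.state k).branches := by
  induction k with
  | zero => rwa [S.state_zero]
  | succ k ih => exact (S.step k).injOn_lane ih

/-- The horizontal coordinate of the strand `j` at time `t`. -/
def coord (j : Fin n) (t : ℝ) : ℝ :=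
  track (fun k => (S.state k).lane σ (.inl j)) (S.exitTime j) (s₀.lane σ (.inr j)) t

theorem coord_of_lt_exitTime (hk : k < S.exitTime j)
    (h : height (S.exitTime j) t ∈ Icc (k : ℝ) (k + 1)) :
    S.coord j t = AffineMap.lineMap ((S.state k).lane σ (branch j t) : ℝ)
      ((S.state (k + 1)).lane σ (branch j t)) (smoothTransition (height (S.exitTime j) t - k)) := by
  rcases lt_or_ge t (1 / 2) with ht | ht
  · rw [branch_of_lt_half ht, coord, track_of_lt_half ht hk h]
  · have hkT : ((k + 1 : ℕ) : ℝ) ≤ S.exitTime j := Nat.cast_le.2 hk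
    rw [Nat.cast_succ] at hkT
    rw [branch_of_half_le ht, coord, track_of_half_le ht (h.2.trans hkT)]
    exact (AffineMap.lineMap_same_apply _ _).symm

theorem coord_of_exitTime_le (h : S.exitTime j ≤ height (S.exitTime j) t) :
    S.coord j t = AffineMap.lineMap ((S.state (S.exitTime j)).lane σ (.inl j) : ℝ)
      ((S.state (S.exitTime j)).lane σ (.inr j)) (bend (S.exitTime j) t) :=
  track_above h

theorem le_exitTime (h : k < height (S.exitTime j) t) : k ≤ S.exitTime j := by
  have hlt : (k : ℝ) < (S.exitTime j + 1 : ℕ) := by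
    push_cast
    exact h.trans_le height_le
  exact Nat.lt_succ_iff.1 (Nat.cast_lt.1 hlt)

theorem coord_mem_Icc (ht : t ∈ Icc (0 : ℝ) 1) : S.coord j t ∈ Icc (0 : ℝ) (2 * n - 1) := by
  have lane_mem : ∀ (s : SweepState n) u, (s.lane σ u : ℝ) ∈ Icc (0 : ℝ) (2 * n - 1) := fun s u =>
    ⟨Nat.cast_nonneg _, le_sub_iff_add_le.2 (mod_cast s.lane_le u)⟩
  exact track_mem (convex_Icc _ _) (fun k => lane_mem _ _) (lane_mem _ _) ht

theorem hasDerivAt_coord (hk : k < S.exitTime j)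
    (h : height (S.exitTime j) t ∈ Ioo (k : ℝ) (k + 1)) :
    HasDerivAt (S.coord j) ((((S.state (k + 1)).lane σ (branch j t) : ℝ) -
      (S.state k).lane σ (branch j t)) * (deriv smoothTransition (height (S.exitTime j) t - k) *
        (4 * (S.exitTime j + 1) * (1 - 2 * t)))) t := by
  have hne : t ≠ 1 / 2 := by
    rintro rfl
    have hkT : ((k + 1 : ℕ) : ℝ) ≤ S.exitTime j := Nat.cast_le.2 hk
    push_cast at hkT
    have := h.2
    rw [height] at this
    linarith
  have hbranch : ∀ᶠ r in 𝓝 t, branch j r = branch j t := by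
    rcases hne.lt_or_gt with ht | ht
    · filter_upwards [gt_mem_nhds ht] with r hr
      rw [branch_of_lt_half hr, branch_of_lt_half ht]
    · filter_upwards [lt_mem_nhds ht] with r hr
      rw [branch_of_half_le hr.le, branch_of_half_le ht.le]
  have hlevel : ∀ᶠ r in 𝓝 t, height (S.exitTime j) r ∈ Ioo (k : ℝ) (k + 1) :=
    contDiff_height.continuous.continuousAt.eventually_mem (isOpen_Ioo.mem_nhds h)
  have hderiv := ((hasDerivAt_smoothTransition _).comp t
    ((hasDerivAt_height (S.exitTime j) t).sub_const (k : ℝ))).const_mul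
      (((S.state (k + 1)).lane σ (branch j t) : ℝ) - (S.state k).lane σ (branch j t))
  refine (hderiv.add_const ((S.state k).lane σ (branch j t) : ℝ)).congr_of_eventuallyEq ?_
  filter_upwards [hbranch, hlevel] with r hr hr'
  rw [S.coord_of_lt_exitTime hk ⟨hr'.1.le, hr'.2.le⟩, hr, AffineMap.lineMap_apply_ring', mul_comm]
  rfl

end ExitTime

section Coincidence

variable (S : Sweep σ ⟨Finset.univ, id⟩ c)

theorem injOn_lane_state (k : ℕ) : InjOn ((S.state k).lane σ) (S.state k).branches :=
  S.injOn_lane (SweepState.lane_univ_id_injective σ).injOn k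

theorem mem_active_state_iff : j ∈ (S.state k).active ↔ k ≤ S.exitTime j :=
  S.mem_active_iff (Finset.mem_univ j)

theorem branch_mem_branches (h : k ≤ S.exitTime j) : branch j t ∈ (S.state k).branches :=
  SweepState.branch_mem_branches (S.mem_active_state_iff.2 h)

theorem coord_ne_of_exitTime_lt (hj : S.exitTime j' < S.exitTime j)
    (ht : height (S.exitTime j) t ∈ Icc (S.exitTime j' : ℝ) (S.exitTime j' + 1))
    (ht' : S.exitTime j' < height (S.exitTime j') t') : S.coord j t ≠ S.coord j' t' := by
  rw [S.coord_of_lt_exitTime hj ht, S.coord_of_exitTime_le ht'.le]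
  exact (S.step _).lineMap_lane_ne (S.injOn_lane_state _) (S.branch_mem_branches hj)
    (S.mem_active_state_iff.2 le_rfl) (mt S.mem_active_state_iff.1 (by simp)) (bend_mem_Ioo ht')

theorem eq_of_coord_eq_of_exitTime_eq (hj : S.exitTime j = S.exitTime j')
    (ht : S.exitTime j < height (S.exitTime j) t)
    (ht' : S.exitTime j' < height (S.exitTime j') t')
    (hcoord : S.coord j t = S.coord j' t') : j = j' ∧ t = t' := by
  obtain rfl : j = j' := (S.step (S.exitTime j)).eq_of_notMem_active
    (S.mem_active_state_iff.2 le_rfl) (mt S.mem_active_state_iff.1 (by simp))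
    (S.mem_active_state_iff.2 hj.le) (mt S.mem_active_state_iff.1 (by simp [hj]))
  rw [S.coord_of_exitTime_le ht.le, S.coord_of_exitTime_le ht'.le] at hcoord
  have lane_ne : ((S.state (S.exitTime j)).lane σ (.inl j) : ℝ) ≠
      (S.state (S.exitTime j)).lane σ (.inr j) :=
    Nat.cast_injective.ne (SweepState.lane_inl_ne_lane_inr _)
  exact ⟨rfl, bend_injective_above ht ht' (AffineMap.lineMap_injective ℝ lane_ne hcoord)⟩

theorem eq_of_isSwap_eq_false (hk : S.isSwap k = false)
    (hlevel : height (S.exitTime j) t ∈ Ioc (k : ℝ) (k + 1))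
    (hheight : height (S.exitTime j) t = height (S.exitTime j') t')
    (hcoord : S.coord j t = S.coord j' t') : j = j' ∧ t = t' := by
  have hlevel' := hheight ▸ hlevel
  have hicc := Ioc_subset_Icc_self hlevel
  have hicc' := Ioc_subset_Icc_self hlevel'
  rcases (S.le_exitTime hlevel.1).eq_or_lt with hj | hj <;>
    rcases (S.le_exitTime hlevel'.1).eq_or_lt with hj' | hj'
  · exact S.eq_of_coord_eq_of_exitTime_eq (hj ▸ hj') (hj ▸ hlevel.1) (hj' ▸ hlevel'.1) hcoord
  · subst hj
    exact absurd hcoord.symm (S.coord_ne_of_exitTime_lt hj' hicc' hlevel.1)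
  · subst hj'
    exact absurd hcoord (S.coord_ne_of_exitTime_lt hj hicc hlevel'.1)
  · rw [S.coord_of_lt_exitTime hj hicc, S.coord_of_lt_exitTime hj' hicc', ← hheight] at hcoord
    have hstep := hk ▸ S.step k
    exact eq_of_branch_eq_of_height_eq (hstep.injOn_lineMap_lane (S.injOn_lane_state k)
      ⟨smoothTransition.nonneg _, smoothTransition.le_one _⟩ (S.branch_mem_branches hj)
      (S.branch_mem_branches hj') hcoord) hheight

theorem lt_exitTime_of_isTripleSwap (h : IsTripleSwap σ (S.state k) (S.state (k + 1)) p q o)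
    (hk : k < height (S.exitTime j) t) : k < S.exitTime j := by
  have hmem := S.mem_active_state_iff.2 (S.le_exitTime hk)
  rw [← h.active_eq] at hmem
  exact S.mem_active_state_iff.1 hmem

theorem eq_or_eq_of_isTripleSwap (h : IsTripleSwap σ (S.state k) (S.state (k + 1)) p q o)
    (hlevel : height (S.exitTime j) t ∈ Ioc (k : ℝ) (k + 1))
    (hheight : height (S.exitTime j) t = height (S.exitTime j') t')
    (hcoord : S.coord j t = S.coord j' t') :
    (j = j' ∧ t = t') ∨ S.coord j t = 2 * σ o + 1 ∧ height (S.exitTime j) t = k + 1 / 2 := by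
  have hlevel' := hheight ▸ hlevel
  have hj := S.lt_exitTime_of_isTripleSwap h hlevel.1
  have hj' := S.lt_exitTime_of_isTripleSwap h hlevel'.1
  rcases eq_or_ne (branch j t) (branch j' t') with hbranch | hbranch
  · exact .inl (eq_of_branch_eq_of_height_eq hbranch hheight)
  have hx := S.coord_of_lt_exitTime hj (Ioc_subset_Icc_self hlevel)
  have hx' := S.coord_of_lt_exitTime hj' (Ioc_subset_Icc_self hlevel')
  rw [← hcoord, ← hheight] at hx'
  obtain ⟨hhalf, hout⟩ := h.eq_half_of_lineMap_lane_eq (S.injOn_lane_state k)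
    (S.branch_mem_branches hj.le) (S.branch_mem_branches hj'.le) hbranch
    ⟨smoothTransition.nonneg _, smoothTransition.le_one _⟩ hx hx'
  have hmem : height (S.exitTime j) t - k ∈ Icc (0 : ℝ) 1 :=
    ⟨sub_nonneg.2 hlevel.1.le, by linarith [hlevel.2]⟩
  exact .inr ⟨hout, by linarith [eq_half_of_smoothTransition_eq_half hmem hhalf]⟩

theorem coord_eq_iff_of_isTripleSwap (h : IsTripleSwap σ (S.state k) (S.state (k + 1)) p q o)
    (hheight : height (S.exitTime j) t = k + 1 / 2) :
    S.coord j t = 2 * σ o + 1 ↔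
      branch j t = .inl p ∨ branch j t = .inl q ∨ branch j t = .inr o := by
  have hj := S.lt_exitTime_of_isTripleSwap h (by linarith : (k : ℝ) < height (S.exitTime j) t)
  have hx := S.coord_of_lt_exitTime hj ⟨by linarith, by linarith⟩
  rw [hheight, add_sub_cancel_left, smoothTransition_half] at hx
  have hcases := h.lineMap_lane_cases (S.injOn_lane_state k) (S.branch_mem_branches hj.le) hx
  have hp : ((S.state k).lane σ (.inl p) : ℝ) = 2 * σ o := mod_cast h.lane_left
  have hq : ((S.state k).lane σ (.inl q) : ℝ) = 2 * σ o + 2 := mod_cast h.lane_right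
  have ho : ((S.state k).lane σ (.inr o) : ℝ) = 2 * σ o + 1 := mod_cast rfl
  clear hx
  grind

end Coincidence

end Sweep

end Strand

/-! ### The diagram of a sweep -/

section TriplePoint

variable {na nl : ℕ}

namespace PreDiagram

variable {D : PreDiagram na nl} {z : Plane}

/-- Exactly three branches pass through `z`; they are transverse to each other and their tangent
rays alternate between outgoing and incoming ones. -/
def IsTriplePoint (D : PreDiagram na nl) (z : Plane) : Prop :=
  ∃ q₁ q₂ q₃, D.passages z = {q₁, q₂, q₃} ∧
    LinearIndependent ℝ ![D.tangent q₁, D.tangent q₂] ∧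
    LinearIndependent ℝ ![D.tangent q₁, D.tangent q₃] ∧
    LinearIndependent ℝ ![D.tangent q₂, D.tangent q₃] ∧
    ∃ a b c : ℝ, 0 < a ∧ 0 < b ∧ 0 < c ∧
      a • D.tangent q₁ + b • D.tangent q₂ + c • D.tangent q₃ = 0

theorem ne_of_linearIndependent_tangent {q q' : (Fin na × ℝ) ⊕ (Fin nl × ℝ)}
    (h : LinearIndependent ℝ ![D.tangent q, D.tangent q']) : q ≠ q' := by
  rintro rfl
  exact zero_ne_one (h.injective (a₁ := 0) (a₂ := 1) rfl)

theorem IsTriplePoint.ncard_passages (h : D.IsTriplePoint z) : (D.passages z).ncard = 3 := by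
  obtain ⟨q₁, q₂, q₃, heq, h₁₂, h₁₃, h₂₃, -⟩ := h
  exact ncard_eq_three.2 ⟨q₁, q₂, q₃, ne_of_linearIndependent_tangent h₁₂,
    ne_of_linearIndependent_tangent h₁₃, ne_of_linearIndependent_tangent h₂₃, heq⟩

theorem IsTriplePoint.isMultiplePoint (h : D.IsTriplePoint z) : D.IsMultiplePoint z := by
  obtain ⟨q₁, q₂, q₃, heq, h₁₂, -⟩ := h
  exact fun hsub => ne_of_linearIndependent_tangent h₁₂ (hsub (by simp [heq]) (by simp [heq]))

/-- A diagram in which every multiple point is a triple point. -/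
def toTripleDiagram (D : PreDiagram na nl) (hfin : {z | D.IsMultiplePoint z}.Finite)
    (h : ∀ z, D.IsMultiplePoint z → D.IsTriplePoint z) : TripleDiagram na nl where
  toPreDiagram := D
  multiple_finite := hfin
  triple z hz := (h z hz).ncard_passages
  branches_transverse z hz q hq q' hq' hne := by
    obtain ⟨q₁, q₂, q₃, heq, h₁₂, h₁₃, h₂₃, -⟩ := h z hz
    rw [heq] at hq hq'
    obtain rfl | rfl | rfl := hq <;> obtain rfl | rfl | rfl := hq' <;>
      first
      | exact absurd rfl hne
      | assumption
      | exact LinearIndependent.pair_symm_iff.1 ‹_›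
  alternating z hz := by
    obtain ⟨q₁, q₂, q₃, heq, -, -, -, hsum⟩ := h z hz
    exact ⟨q₁, q₂, q₃, heq, hsum⟩

theorem IsTriplePoint.of_tangent_eq {n : ℕ} (hn : 0 < n) {x y s h₁ h₂ h₃ : ℝ}
    {q₁ q₂ q₃ : (Fin na × ℝ) ⊕ (Fin nl × ℝ)} (hz : D.passages z = {q₁, q₂, q₃})
    (ht₁ : D.tangent q₁ = polarTangent n x y (s * h₁, h₁))
    (ht₂ : D.tangent q₂ = polarTangent n x y (-s * h₂, h₂))
    (ht₃ : D.tangent q₃ = polarTangent n x y (0, h₃))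
    (hs : s ≠ 0) (hh₁ : 0 < h₁) (hh₂ : 0 < h₂) (hh₃ : h₃ < 0) : D.IsTriplePoint z := by
  refine ⟨q₁, q₂, q₃, hz, ?_, ?_, ?_, h₁⁻¹, h₂⁻¹, 2 * (-h₃)⁻¹, inv_pos.2 hh₁, inv_pos.2 hh₂,
    mul_pos two_pos (inv_pos.2 (neg_pos.2 hh₃)), ?_⟩
  · rw [ht₁, ht₂]
    refine linearIndependent_polarTangent hn (sub_ne_zero.1 ?_)
    have := mul_ne_zero hs (mul_pos hh₁ hh₂).ne'
    intro h
    exact this (by linarith)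
  · rw [ht₁, ht₃]
    exact linearIndependent_polarTangent hn (by simp [hs, hh₁.ne', hh₃.ne])
  · rw [ht₂, ht₃]
    exact linearIndependent_polarTangent hn (by simp [hs, hh₂.ne', hh₃.ne])
  · have hsum : h₁⁻¹ • (s * h₁, h₁) + h₂⁻¹ • (-s * h₂, h₂) + (2 * (-h₃)⁻¹) • ((0 : ℝ), h₃) = 0 := by
      have := hh₁.ne'
      have := hh₂.ne'
      have := hh₃.ne
      ext <;>
      · simp only [Prod.fst_add, Prod.snd_add, Prod.smul_fst, Prod.smul_snd, Prod.fst_zero,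
          Prod.snd_zero, smul_eq_mul]
        field_simp
        ring
    rw [ht₁, ht₂, ht₃, ← map_smul, ← map_smul, ← map_smul, ← map_add, ← map_add, hsum, map_zero]

end PreDiagram

end TriplePoint

namespace Sweep

variable {n c : ℕ} {σ : Equiv.Perm (Fin n)} {j : Fin n} {t x y : ℝ}
  (S : Sweep σ ⟨Finset.univ, id⟩ c)

/-- The strand `j` in the disk. -/
def strand (j : Fin n) (t : ℝ) : Plane :=
  polarChart n (S.coord j t) (height (S.exitTime j) t)

theorem strand_zero (j : Fin n) : S.strand j 0 = bpoint n (2 * j) := by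
  simp [strand, coord, track_zero, S.state_zero, height, polarChart, bpoint, SweepState.lane]

theorem strand_one (j : Fin n) : S.strand j 1 = bpoint n (2 * σ j + 1) := by
  simp [strand, coord, track_one, height, polarChart, bpoint, SweepState.lane]

theorem norm_strand : ‖S.strand j t‖ = exp (-height (S.exitTime j) t) := norm_polarChart

theorem strand_eq_iff (ht : t ∈ Icc (0 : ℝ) 1) (hx : x ∈ Icc (0 : ℝ) (2 * n - 1)) :
    S.strand j t = polarChart n x y ↔ S.coord j t = x ∧ height (S.exitTime j) t = y :=
  polarChart_eq_iff j.pos (S.coord_mem_Icc ht) hx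

theorem contDiff_coord (j : Fin n) : ContDiff ℝ ∞ (S.coord j) := contDiff_track

theorem contDiff_strand (j : Fin n) : ContDiff ℝ ∞ (S.strand j) :=
  contDiff_polarChart (S.contDiff_coord j) contDiff_height

theorem deriv_strand_eq_of_hasDerivAt {x' : ℝ} (h : HasDerivAt (S.coord j) x' t) :
    deriv (S.strand j) t = polarTangent n (S.coord j t) (height (S.exitTime j) t)
      (x', 4 * (S.exitTime j + 1) * (1 - 2 * t)) :=
  (hasDerivAt_polarChart h (hasDerivAt_height _ t)).deriv

theorem deriv_strand (j : Fin n) (t : ℝ) :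
    deriv (S.strand j) t = polarTangent n (S.coord j t) (height (S.exitTime j) t)
      (deriv (S.coord j) t, 4 * (S.exitTime j + 1) * (1 - 2 * t)) :=
  S.deriv_strand_eq_of_hasDerivAt ((S.contDiff_coord j).differentiable (by simp) t).hasDerivAt

theorem deriv_coord_half_ne_zero (j : Fin n) : deriv (S.coord j) (1 / 2) ≠ 0 :=
  deriv_track_half_ne_zero (a := fun k => ((S.state k).lane σ (.inl j) : ℝ))
    (Nat.cast_injective.ne (SweepState.lane_inl_ne_lane_inr _))

theorem deriv_strand_ne_zero (j : Fin n) (t : ℝ) : deriv (S.strand j) t ≠ 0 := by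
  rw [deriv_strand]
  intro h
  obtain ⟨hx, hy⟩ := Prod.mk_eq_zero.1 (LinearMap.ker_eq_bot'.1 (ker_polarTangent j.pos) _ h)
  have hslope : 1 - 2 * t = 0 := (mul_eq_zero.1 hy).resolve_left (by positivity)
  obtain rfl : t = 1 / 2 := by linarith
  exact S.deriv_coord_half_ne_zero j hx

theorem inner_deriv_strand_ne_zero (ht : t ≠ 1 / 2) :
    ⟪deriv (S.strand j) t, S.strand j t⟫ ≠ 0 := by
  rw [deriv_strand, strand, inner_polarTangent_polarChart]
  have hT : (4 * (S.exitTime j + 1) : ℝ) ≠ 0 := by positivity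
  have hslope : 1 - 2 * t ≠ 0 := fun h => ht (by linarith)
  simp [hT, hslope]

theorem bpoint_injOn : InjOn (bpoint n) (Iio (2 * n)) := by
  have heq : ∀ m : ℕ, bpoint n m = polarChart n m 0 := fun m => by simp [bpoint, polarChart]
  have hmem : ∀ m ∈ Iio (2 * n), (m : ℝ) ∈ Icc (0 : ℝ) (2 * n - 1) := fun m hm =>
    ⟨m.cast_nonneg, le_sub_iff_add_le.2 (mod_cast hm)⟩
  intro k hk m hm h
  have hn : 0 < n := Nat.pos_of_mul_pos_left (Nat.zero_lt_of_lt hk)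
  rw [heq, heq, polarChart_eq_iff hn (hmem k hk) (hmem m hm)] at h
  exact Nat.cast_injective h.1

/-- The diagram traced out by a sweep. -/
def preDiagram : PreDiagram n 0 where
  arc := S.strand
  loop := finZeroElim
  arc_smooth := S.contDiff_strand
  loop_smooth := finZeroElim
  loop_periodic := finZeroElim
  arc_immersed j t _ := S.deriv_strand_ne_zero j t
  loop_immersed := finZeroElim
  arc_in_disk j t ht := by
    rw [norm_strand, exp_le_one_iff, neg_nonpos]
    exact height_nonneg ht
  arc_interior j t ht := by
    rw [norm_strand, exp_lt_one_iff, neg_lt_zero]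
    exact height_pos ht
  arc_start_bdry j := by simp [norm_strand, height]
  arc_end_bdry j := by simp [norm_strand, height]
  arc_transverse_start j := S.inner_deriv_strand_ne_zero (by norm_num)
  arc_transverse_end j := S.inner_deriv_strand_ne_zero (by norm_num)
  loop_in_disk := finZeroElim
  endpoints_distinct := by
    have heq : (Sum.elim (S.strand · 0) (S.strand · 1) : Fin n ⊕ Fin n → Plane) =
        bpoint n ∘ SweepState.lane σ ⟨Finset.univ, id⟩ := by
      funext u
      cases u
      · exact S.strand_zero _
      · exact S.strand_one _
    rw [heq]
    intro u v h
    exact SweepState.lane_univ_id_injective σ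
      (bpoint_injOn (SweepState.lane_le _ u) (SweepState.lane_le _ v) h)

end Sweep

namespace Sweep

variable {n c k : ℕ} {σ : Equiv.Perm (Fin n)} {j p q o : Fin n} {t t₁ t₂ t₃ : ℝ} {z : Plane}
  (S : Sweep σ ⟨Finset.univ, id⟩ c)

section Swap

theorem strand_eq_iff_of_isTripleSwap
    (h : IsTripleSwap σ (S.state k) (S.state (k + 1)) p q o) (ht : t ∈ Ioo (0 : ℝ) 1) :
    S.strand j t = polarChart n (2 * σ o + 1) (k + 1 / 2) ↔
      (branch j t = .inl p ∨ branch j t = .inl q ∨ branch j t = .inr o) ∧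
        height (S.exitTime j) t = k + 1 / 2 := by
  have hout : (2 * σ o + 1 : ℝ) ∈ Icc (0 : ℝ) (2 * n - 1) := by
    have hlt : (σ o + 1 : ℝ) ≤ n := mod_cast (σ o).isLt
    constructor <;> linarith [(Nat.cast_nonneg (σ o : ℕ) : (0 : ℝ) ≤ (σ o : ℕ))]
  rw [S.strand_eq_iff (Ioo_subset_Icc_self ht) hout]
  exact and_congr_left fun hheight => S.coord_eq_iff_of_isTripleSwap h hheight

theorem passages_eq_of_isTripleSwap (h : IsTripleSwap σ (S.state k) (S.state (k + 1)) p q o)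
    (ht₁ : t₁ ∈ Ioo (0 : ℝ) (1 / 2)) (hp : height (S.exitTime p) t₁ = k + 1 / 2)
    (ht₂ : t₂ ∈ Ioo (0 : ℝ) (1 / 2)) (hq : height (S.exitTime q) t₂ = k + 1 / 2)
    (ht₃ : t₃ ∈ Ioo (1 / 2 : ℝ) 1) (ho : height (S.exitTime o) t₃ = k + 1 / 2) :
    S.preDiagram.passages (polarChart n (2 * σ o + 1) (k + 1 / 2)) =
      {.inl (p, t₁), .inl (q, t₂), .inl (o, t₃)} := by
  have hbp := branch_of_lt_half (j := p) ht₁.2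
  have hbq := branch_of_lt_half (j := q) ht₂.2
  have hbo := branch_of_half_le (j := o) ht₃.1.le
  have mem_iff : ∀ j t, .inl (j, t) ∈ S.preDiagram.passages
      (polarChart n (2 * σ o + 1) (k + 1 / 2)) ↔ t ∈ Ioo (0 : ℝ) 1 ∧
        (branch j t = .inl p ∨ branch j t = .inl q ∨ branch j t = .inr o) ∧
          height (S.exitTime j) t = k + 1 / 2 := fun j t =>
    and_congr_right fun ht => S.strand_eq_iff_of_isTripleSwap h ht
  refine Subset.antisymm ?_ ?_
  · rintro (⟨j, t⟩ | ⟨⟨_, ⟨⟩⟩, -⟩) hmem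
    obtain ⟨-, hbranch, hheight⟩ := (mem_iff j t).1 hmem
    rw [← hbp, ← hbq, ← hbo] at hbranch
    obtain hj | hj | hj := hbranch
    · obtain ⟨rfl, rfl⟩ := eq_of_branch_eq_of_height_eq hj (hheight.trans hp.symm)
      exact .inl rfl
    · obtain ⟨rfl, rfl⟩ := eq_of_branch_eq_of_height_eq hj (hheight.trans hq.symm)
      exact .inr (.inl rfl)
    · obtain ⟨rfl, rfl⟩ := eq_of_branch_eq_of_height_eq hj (hheight.trans ho.symm)
      exact .inr (.inr rfl)
  · rintro _ (rfl | rfl | rfl)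
    · exact (mem_iff p t₁).2 ⟨⟨ht₁.1, by linarith [ht₁.2]⟩, .inl hbp, hp⟩
    · exact (mem_iff q t₂).2 ⟨⟨ht₂.1, by linarith [ht₂.2]⟩, .inr (.inl hbq), hq⟩
    · exact (mem_iff o t₃).2 ⟨⟨by linarith [ht₃.1], ht₃.2⟩, .inr (.inr hbo), ho⟩

theorem deriv_strand_of_isTripleSwap {d : ℝ}
    (h : IsTripleSwap σ (S.state k) (S.state (k + 1)) p q o) (ht : t ∈ Ioo (0 : ℝ) 1)
    (hz : S.strand j t = polarChart n (2 * σ o + 1) (k + 1 / 2))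
    (hd : ((S.state (k + 1)).lane σ (branch j t) : ℝ) = (S.state k).lane σ (branch j t) + d) :
    deriv (S.strand j) t = polarTangent n (2 * σ o + 1) (k + 1 / 2)
      (d * deriv smoothTransition (1 / 2) * (4 * (S.exitTime j + 1) * (1 - 2 * t)),
        4 * (S.exitTime j + 1) * (1 - 2 * t)) := by
  obtain ⟨hbranch, hheight⟩ := (S.strand_eq_iff_of_isTripleSwap h ht).1 hz
  have hj := S.lt_exitTime_of_isTripleSwap h (by linarith : (k : ℝ) < height (S.exitTime j) t)
  have hderiv := S.hasDerivAt_coord hj (t := t) ⟨by linarith, by linarith⟩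
  rw [S.deriv_strand_eq_of_hasDerivAt hderiv, hheight, add_sub_cancel_left,
    (S.coord_eq_iff_of_isTripleSwap h hheight).2 hbranch, hd, add_sub_cancel_left,
    ← mul_assoc d]

theorem exists_height_eq_of_mem_active (hj : j ∈ (S.state k).active) :
    ∃ t ∈ Ioo (0 : ℝ) (1 / 2), height (S.exitTime j) t = k + 1 / 2 := by
  have hk : (k : ℝ) ≤ S.exitTime j := Nat.cast_le.2 (S.mem_active_state_iff.1 hj)
  exact exists_lt_half_height_eq ⟨by positivity, by linarith⟩

theorem isTriplePoint_of_isTripleSwap (h : IsTripleSwap σ (S.state k) (S.state (k + 1)) p q o) :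
    S.preDiagram.IsTriplePoint (polarChart n (2 * σ o + 1) (k + 1 / 2)) := by
  obtain ⟨t₁, ht₁, hp⟩ := S.exists_height_eq_of_mem_active h.mem_left
  obtain ⟨t₂, ht₂, hq⟩ := S.exists_height_eq_of_mem_active h.mem_right
  obtain ⟨t₃, ht₃, ho⟩ := S.exists_height_eq_of_mem_active h.mem_out
  rw [← height_one_sub] at ho
  have ht₃' : 1 - t₃ ∈ Ioo (1 / 2 : ℝ) 1 := ⟨by linarith [ht₃.2], by linarith [ht₃.1]⟩
  have hpass := S.passages_eq_of_isTripleSwap h ht₁ hp ht₂ hq ht₃' ho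
  have mem_p : .inl (p, t₁) ∈ S.preDiagram.passages _ := hpass.ge (.inl rfl)
  have mem_q : .inl (q, t₂) ∈ S.preDiagram.passages _ := hpass.ge (.inr (.inl rfl))
  have mem_o : .inl (o, 1 - t₃) ∈ S.preDiagram.passages _ := hpass.ge (.inr (.inr rfl))
  have lane_p : ((S.state (k + 1)).lane σ (branch p t₁) : ℝ) =
      (S.state k).lane σ (branch p t₁) + 2 := by
    simp [branch_of_lt_half ht₁.2, h.lane_eq, h.lane_left, h.lane_right]
  have lane_q : ((S.state (k + 1)).lane σ (branch q t₂) : ℝ) =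
      (S.state k).lane σ (branch q t₂) + -2 := by
    simp [branch_of_lt_half ht₂.2, h.lane_eq, h.lane_left, h.lane_right]
  have lane_o : ((S.state (k + 1)).lane σ (branch o (1 - t₃)) : ℝ) =
      (S.state k).lane σ (branch o (1 - t₃)) + 0 := by
    simp [branch_of_half_le ht₃'.1.le, h.lane_eq]
  have tangent_p := S.deriv_strand_of_isTripleSwap h mem_p.1 mem_p.2 lane_p
  have tangent_q := S.deriv_strand_of_isTripleSwap h mem_q.1 mem_q.2 lane_q
  have tangent_o := S.deriv_strand_of_isTripleSwap h mem_o.1 mem_o.2 lane_o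
  rw [neg_mul 2] at tangent_q
  rw [zero_mul, zero_mul] at tangent_o
  exact .of_tangent_eq p.pos hpass tangent_p tangent_q tangent_o
    (mul_ne_zero two_ne_zero (deriv_smoothTransition_pos (by norm_num)).ne')
    (mul_pos (by positivity) (by linarith [ht₁.2])) (mul_pos (by positivity) (by linarith [ht₂.2]))
    (mul_neg_of_pos_of_neg (by positivity) (by linarith [ht₃.2]))

end Swap

section MultiplePoints

theorem lt_length_of_isSwap (hk : S.isSwap k = true) : k < S.length := by
  obtain ⟨p, q, o, h⟩ := (hk ▸ S.step k).exists_isTripleSwap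
  by_contra! hlength
  simpa [S.active_length] using S.antitone_active hlength h.mem_left

theorem exists_isSwap_of_isMultiplePoint (hz : S.preDiagram.IsMultiplePoint z) :
    ∃ k, S.isSwap k = true ∧ ∀ p q o, IsTripleSwap σ (S.state k) (S.state (k + 1)) p q o →
      z = polarChart n (2 * σ o + 1) (k + 1 / 2) := by
  obtain ⟨⟨j, t⟩ | ⟨⟨_, ⟨⟩⟩, -⟩, hu, ⟨j', t'⟩ | ⟨⟨_, ⟨⟩⟩, -⟩, hv, hne⟩ :=
    not_subsingleton_iff.1 hz
  obtain ⟨ht : t ∈ Ioo 0 1, hzt : S.strand j t = z⟩ := hu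
  obtain ⟨ht' : t' ∈ Ioo 0 1, hzt' : S.strand j' t' = z⟩ := hv
  obtain ⟨hcoord, hheight⟩ := (S.strand_eq_iff (Ioo_subset_Icc_self ht)
    (S.coord_mem_Icc (Ioo_subset_Icc_self ht'))).1 (hzt.trans hzt'.symm)
  obtain ⟨k, hlevel⟩ := exists_nat_lt_le_add_one (height_pos (T := S.exitTime j) ht)
  have not_eq : ¬(j = j' ∧ t = t') := by
    rintro ⟨rfl, rfl⟩
    exact hne rfl
  refine ⟨k, ?_, fun p q o h => ?_⟩
  · by_contra hk
    exact not_eq (S.eq_of_isSwap_eq_false (Bool.not_eq_true _ ▸ hk) hlevel hheight hcoord)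
  · obtain ⟨hx, hy⟩ := (S.eq_or_eq_of_isTripleSwap h hlevel hheight hcoord).resolve_left not_eq
    rw [← hzt, strand, hx, hy]

theorem exists_isTriplePoint_image_isSwap : ∃ f : ℕ → Plane, Function.Injective f ∧
    (∀ k, S.isSwap k = true → S.preDiagram.IsTriplePoint (f k)) ∧
      {z | S.preDiagram.IsMultiplePoint z} = f '' {k | S.isSwap k = true} := by
  have exists_out : ∀ k, ∃ x : ℝ, S.isSwap k = true →
      ∃ p q o, IsTripleSwap σ (S.state k) (S.state (k + 1)) p q o ∧ 2 * σ o + 1 = x := by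
    intro k
    by_cases hk : S.isSwap k = true
    · obtain ⟨p, q, o, h⟩ := (hk ▸ S.step k).exists_isTripleSwap
      exact ⟨_, fun _ => ⟨p, q, o, h, rfl⟩⟩
    · exact ⟨0, fun h => absurd h hk⟩
  choose x hx using exists_out
  have htriple : ∀ k, S.isSwap k = true →
      S.preDiagram.IsTriplePoint (polarChart n (x k) (k + 1 / 2)) := by
    intro k hk
    obtain ⟨p, q, o, h, hout⟩ := hx k hk
    exact hout ▸ S.isTriplePoint_of_isTripleSwap h
  refine ⟨fun k => polarChart n (x k) (k + 1 / 2), fun k m h => ?_, htriple,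
    Subset.antisymm (fun z hz => ?_) ?_⟩
  · simpa [norm_polarChart] using congrArg norm h
  · obtain ⟨k, hk, hzk⟩ := S.exists_isSwap_of_isMultiplePoint hz
    obtain ⟨p, q, o, h, hout⟩ := hx k hk
    exact ⟨k, hk, by rw [hzk p q o h, hout]⟩
  · rintro _ ⟨k, hk, rfl⟩
    exact (htriple k hk).isMultiplePoint

theorem setOf_isSwap_eq : {k | S.isSwap k = true} =
    ({k ∈ Finset.range S.length | S.isSwap k = true} : Finset ℕ) := by
  ext k
  simpa using S.lt_length_of_isSwap

theorem exists_tripleDiagram (S : Sweep σ ⟨Finset.univ, id⟩ c) :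
    ∃ D : TripleDiagram n 0, Realizes D σ ∧ D.tripleCount = c := by
  obtain ⟨f, hf, htriple, himage⟩ := S.exists_isTriplePoint_image_isSwap
  have hfin : {z | S.preDiagram.IsMultiplePoint z}.Finite := by
    rw [himage, setOf_isSwap_eq]
    exact (Finset.finite_toSet _).image f
  refine ⟨S.preDiagram.toTripleDiagram hfin fun z hz => ?_,
    fun j => ⟨S.strand_zero j, S.strand_one j⟩, ?_⟩
  · obtain ⟨k, hk, rfl⟩ := himage.subset hz
    exact htriple k hk
  · calc {z | S.preDiagram.IsMultiplePoint z}.ncard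
        = {k | S.isSwap k = true}.ncard := by rw [himage, ncard_image_of_injective _ hf]
      _ = Nat.count (S.isSwap · = true) S.length := by
        rw [setOf_isSwap_eq, ncard_coe_finset, Nat.count_eq_card_filter_range]
      _ = c := S.count_isSwap

end MultiplePoints

end Sweep

end

/-- **Theorem (standard diagrams and their crossing count).** For every `n ≥ 1` and every
bijection `σ : Fin n → Fin n`, there is a triple diagram without closed strands realizing
`σ` whose number of triple points is exactly `N(σ)`. -/
theorem triple_diagram_exists_with_Ncross_crossings (n : ℕ) (hn : 1 ≤ n)
    (σ : Equiv.Perm (Fin n)) :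
    ∃ D : TripleDiagram n 0, Realizes D σ ∧ D.tripleCount = Ncross n σ := by
  obtain ⟨S⟩ := nonempty_sweep_Ncross σ
  exact S.exists_tripleDiagram
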